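/- arXiv:2404.15448 — 4 statements merged into one kernel-verified Lean document; each statement's English description precedes it below -/
import Mathlib

section
/- Let μ be a non-negative Poisson measure on ℝ^d. Then for every continuous compactly supported function ψ : ℝ^d → ℂ, the convolution (μ⋆ψ)(t) = ∫ ψ(t−x) dμ(x) is a Bohr almost periodic function of t ∈ ℝ^d; that is, μ is an almost periodic measure. -/
open MeasureTheory Metric Filter Topology Complex SchwartzMap Bornology
open scoped RealInnerProductSpace ENNReal

noncomputable section

/-- A continuous function `g` is *Bohr almost periodic* if for every `ε > 0` its set of
`ε`-almost periods is relatively dense. -/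
def IsBohrAP {V : Type*} [SeminormedAddCommGroup V] (g : V → ℂ) : Prop :=
  Continuous g ∧ ∀ ε : ℝ, 0 < ε → ∃ L : ℝ, 0 < L ∧ ∀ x : V, ∃ τ : V,
    dist τ x < L ∧ ∀ y : V, ‖g (y + τ) - g y‖ < ε

/-- A pure point complex measure on `V`, described by its (countably supported) mass function. -/
structure PPM (V : Type*) where
  mass : V → ℂ
  countable : (Function.support mass).Countable

namespace PPM

variable {V : Type*}

/-- The total variation of a pure point measure, evaluated on a set. -/
def var (μ : PPM V) (A : Set V) : ℝ≥0∞ := ∑' x : A, (‖μ.mass x‖₊ : ℝ≥0∞)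

/-- Pairing of a pure point measure with a test function: `∫ φ dμ = Σ_x μ{x}·φ(x)`. -/
def pair (μ : PPM V) (φ : V → ℂ) : ℂ := ∑' x, μ.mass x * φ x

/-- Convolution `(μ ⋆ ψ)(t) = ∫ ψ(t - x) dμ(x)`. -/
def conv [SubtractionMonoid V] (μ : PPM V) (ψ : V → ℂ) (t : V) : ℂ :=
  ∑' x, μ.mass x * ψ (t - x)

/-- A pure point measure is non-negative if each mass is a non-negative real number. -/
def Nonneg (μ : PPM V) : Prop := ∀ x, μ.mass x = (‖μ.mass x‖ : ℂ)

end PPM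

/-- Euclidean space `ℝ^d`. -/
abbrev Ed (d : ℕ) := EuclideanSpace ℝ (Fin d)

variable {d : ℕ}

/-- Local finiteness: the total variation of every ball is finite. -/
def PPM.locFinite (μ : PPM (Ed d)) : Prop := ∀ r : ℝ, μ.var (ball 0 r) < ⊤

/-- The measure is a temperate distribution: it pairs (absolutely) with every Schwartz
function. -/
def PPM.temperate (μ : PPM (Ed d)) : Prop :=
  ∀ φ : SchwartzMap (Ed d) ℂ, Summable fun x => μ.mass x * φ x

/-- `ν` is the distributional Fourier transform of `μ`: `μ(φ̂) = ν(φ)` on test functions. -/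
def IsFT (μ ν : PPM (Ed d)) : Prop :=
  ∀ φ : SchwartzMap (Ed d) ℂ, HasCompactSupport φ →
    μ.pair ⇑(FourierTransform.fourierCLE ℂ (SchwartzMap (Ed d) ℂ) φ) = ν.pair ⇑φ

/-- A Poisson measure: a pure point measure which is a temperate distribution and whose
distributional Fourier transform is a pure point measure. -/
def IsPoisson (μ : PPM (Ed d)) : Prop :=
  μ.locFinite ∧ μ.temperate ∧ ∃ ν : PPM (Ed d), ν.locFinite ∧ IsFT μ ν


open scoped FourierTransform

lemma ap_trig (c : Ed d → ℂ) (hcs : Summable fun s => ‖c s‖) (ε : ℝ) (hε : 0 < ε) :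
    ∃ L : ℝ, 0 < L ∧ ∀ x : Ed d, ∃ τ : Ed d, dist τ x < L ∧
      ∀ y : Ed d, ‖(∑' s, c s * (𝐞 (inner ℝ s (y + τ)) : ℂ))
        - ∑' s, c s * (𝐞 (inner ℝ s y) : ℂ)‖ < ε := by
  let D : (Ed d → Circle) → (Ed d → Circle) → ℝ :=
    fun z w => ∑' s, ‖c s‖ * ‖(z s : ℂ) - (w s : ℂ)‖
  have hb : ∀ (z w : Ed d → Circle) (s : Ed d),
      ‖‖c s‖ * ‖(z s : ℂ) - (w s : ℂ)‖‖ ≤ ‖c s‖ * 2 := by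
    intro z w s
    rw [norm_mul, norm_norm, norm_norm]
    gcongr
    calc ‖(z s : ℂ) - (w s : ℂ)‖ ≤ ‖(z s : ℂ)‖ + ‖(w s : ℂ)‖ := norm_sub_le _ _
      _ = 2 := by rw [Circle.norm_coe, Circle.norm_coe]; norm_num
  have hsum2 : Summable fun s => ‖c s‖ * 2 := hcs.mul_right 2
  have hsm : ∀ z w : Ed d → Circle, Summable fun s => ‖c s‖ * ‖(z s : ℂ) - (w s : ℂ)‖ :=
    fun z w => Summable.of_norm_bounded hsum2 (hb z w)
  have hD : ∀ z, Continuous (D z) := by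
    intro z
    refine continuous_tsum (fun s => ?_) hsum2 (fun s w => hb z w s)
    fun_prop
  have hsymm : ∀ z w, D z w = D w z := by
    intro z w
    simp only [D]
    congr 1; ext s; rw [norm_sub_rev]
  have hself : ∀ z, D z z = 0 := by intro z; simp [D]
  let Φ : Ed d → (Ed d → Circle) := fun τ s => 𝐞 (inner ℝ s τ)
  have hK : IsCompact (closure (Set.range Φ)) := isClosed_closure.isCompact
  obtain ⟨T, hT⟩ := hK.elim_finite_subcover (fun τ => {w | D (Φ τ) w < ε})
    (fun τ => isOpen_lt (hD _) continuous_const) (by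
      intro z hz
      rw [_root_.mem_closure_iff] at hz
      obtain ⟨w, hw, τ, rfl⟩ := hz {w | D z w < ε} (isOpen_lt (hD _) continuous_const)
        (by simp [hself, hε])
      refine Set.mem_iUnion.2 ⟨τ, ?_⟩
      simpa [hsymm (Φ τ) z] using hw)
  refine ⟨1 + ∑ τ ∈ T, ‖τ‖, by positivity, fun x => ?_⟩
  have hx := hT (subset_closure ⟨x, rfl⟩)
  simp only [Set.mem_iUnion, Set.mem_ofPred_eq, exists_prop] at hx
  obtain ⟨τ, hτ, hlt⟩ := hx
  refine ⟨x - τ, ?_, fun y => ?_⟩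
  · have := Finset.single_le_sum (f := fun τ : Ed d => ‖τ‖) (fun i _ => norm_nonneg i) hτ
    rw [dist_eq_norm]
    simp only [sub_sub_cancel_left, norm_neg] at *
    linarith
  · have h1 : ∀ v : Ed d, Summable fun s => c s * (𝐞 (inner ℝ s v) : ℂ) := fun v =>
      Summable.of_norm (by simpa only [norm_mul, Circle.norm_coe, mul_one] using hcs)
    rw [← (h1 _).tsum_sub (h1 _)]
    have h2 : ∀ s, ‖c s * (𝐞 (inner ℝ s (y + (x - τ))) : ℂ) - c s * (𝐞 (inner ℝ s y) : ℂ)‖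
        = ‖c s‖ * ‖(Φ τ s : ℂ) - (Φ x s : ℂ)‖ := by
      intro s
      rw [← mul_sub, norm_mul]
      congr 1
      have e1 : (𝐞 (inner ℝ s (y + (x - τ))) : ℂ) - (𝐞 (inner ℝ s y) : ℂ)
        = (𝐞 (inner ℝ s (y - τ)) : ℂ) * ((Φ x s : ℂ) - (Φ τ s : ℂ)) := by
        simp only [Φ, mul_sub, ← Circle.coe_mul, ← AddChar.map_add_eq_mul, ← inner_add_right]
        congr 4 <;> abel_nf
      rw [e1, norm_mul, norm_sub_rev, Circle.norm_coe, one_mul]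
    refine lt_of_le_of_lt (norm_tsum_le_tsum_norm ?_) ?_
    · simp_rw [h2]; exact hsm _ _
    · simp_rw [h2]; exact hlt

lemma exists_mod (φ : SchwartzMap (Ed d) ℂ) (hφ : HasCompactSupport φ) (t : Ed d) :
    ∃ φt : SchwartzMap (Ed d) ℂ, HasCompactSupport φt ∧
      (∀ s, φt s = (𝐞 (inner ℝ s t) : ℂ) * φ s) ∧ ∀ x, (𝓕 φt) x = (𝓕 φ) (x - t) := by
  have h1 : HasCompactSupport (fun s : Ed d => (𝐞 (inner ℝ s t) : ℂ) * φ s) := hφ.mul_left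
  have h2 : ContDiff ℝ (⊤ : ℕ∞) (fun s : Ed d => (𝐞 (inner ℝ s t) : ℂ) * φ s) := by
    refine ContDiff.mul ?_ φ.smooth'
    simp only [Real.fourierChar_apply]
    have h3 : ContDiff ℝ (⊤ : ℕ∞) (fun s : Ed d => ((2 * Real.pi * inner ℝ s t : ℝ) : ℂ)) :=
      Complex.ofRealCLM.contDiff.comp
        (contDiff_const.mul (contDiff_id.inner ℝ contDiff_const))
    exact (h3.mul contDiff_const).cexp
  refine ⟨h1.toSchwartzMap h2, h1, fun s => rfl, fun x => ?_⟩
  rw [SchwartzMap.fourier_coe, SchwartzMap.fourier_coe, Real.fourier_eq, Real.fourier_eq]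
  congr 1; ext v
  change 𝐞 (-inner ℝ v x) • ((𝐞 (inner ℝ v t) : ℂ) * φ v) = _
  simp only [Circle.smul_def, smul_eq_mul, ← mul_assoc, ← Circle.coe_mul,
    ← AddChar.map_add_eq_mul]
  congr 3
  rw [inner_sub_right]; ring_nf

lemma conv_eq (μ ν : PPM (Ed d)) (hT : μ.temperate) (hF : IsFT μ ν)
    (φ : SchwartzMap (Ed d) ℂ) (hφ : HasCompactSupport φ) (t : Ed d) :
    (Summable fun x => μ.mass x * (𝓕 φ) (x - t)) ∧
    ∑' x, μ.mass x * (𝓕 φ) (x - t) = ∑' s, (ν.mass s * φ s) * (𝐞 (inner ℝ s t) : ℂ) := by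
  obtain ⟨φt, hc, h1, h2⟩ := exists_mod φ hφ t
  have h3 := hT (𝓕 φt)
  have h4 := hF φt hc
  simp only [PPM.pair, FourierTransform.fourierCLE_apply, h1, h2] at h3 h4
  refine ⟨h3, h4.trans ?_⟩
  congr 1; ext s; ring

lemma nu_summable (ν : PPM (Ed d)) (hν : ν.locFinite)
    (φ : SchwartzMap (Ed d) ℂ) (hφ : HasCompactSupport φ) :
    Summable fun s => ‖ν.mass s * φ s‖ := by
  obtain ⟨B, hB⟩ := hφ.exists_bound_of_continuous φ.continuous
  obtain ⟨r, hr⟩ := hφ.isCompact.isBounded.subset_ball 0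
  have h1 := (hν r).ne
  rw [PPM.var, ENNReal.tsum_coe_ne_top_iff_summable] at h1
  have h2 : Summable fun x : ball (0 : Ed d) r => ‖ν.mass x‖ := by
    exact NNReal.summable_coe.2 h1
  have h3 := (summable_subtype_iff_indicator (f := fun x => ‖ν.mass x‖)).1 h2
  refine Summable.of_nonneg_of_le (fun _ => norm_nonneg _) (fun s => ?_) (h3.mul_right B)
  by_cases hs : s ∈ ball (0 : Ed d) r
  · rw [Set.indicator_of_mem hs, norm_mul]
    gcongr; exact hB s
  · rw [image_eq_zero_of_notMem_tsupport (fun h => hs (hr h)), Set.indicator_of_notMem hs]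
    simp

lemma exists_pos_kernel (R : ℝ) (hR : 0 < R) :
    ∃ φ : SchwartzMap (Ed d) ℂ, HasCompactSupport φ ∧ ∃ k : Ed d → ℝ,
      ∀ x, (𝓕 φ) x = (k x : ℂ) ∧ 0 ≤ k x ∧ (‖x‖ < R → 1 / 4 ≤ k x) := by
  set ρ : ℝ := (4 * Real.pi * R)⁻¹ with hρ
  have hρ0 : 0 < ρ := by positivity
  let b : ContDiffBump (0 : Ed d) := ⟨ρ / 2, ρ, by positivity, by linarith⟩
  let f : Ed d → ℂ := fun x => ((b.normed volume x : ℝ) : ℂ)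
  have hfs : HasCompactSupport f :=
    (b.hasCompactSupport_normed (μ := volume)).comp_left (g := ((↑) : ℝ → ℂ)) (by simp)
  have hfd : ContDiff ℝ (⊤ : ℕ∞) f := Complex.ofRealCLM.contDiff.comp b.contDiff_normed
  have hfi : Integrable f := hfd.continuous.integrable_of_hasCompactSupport hfs
  have hconvs : HasCompactSupport (MeasureTheory.convolution f f (ContinuousLinearMap.mul ℂ ℂ) volume) :=
    hfs.convolution _ hfs
  have hconvd : ContDiff ℝ (⊤ : ℕ∞)
      (MeasureTheory.convolution f f ((ContinuousLinearMap.mul ℝ ℂ)) volume) :=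
    hfs.contDiff_convolution_right _ hfi.locallyIntegrable hfd
  have hconvd' : ContDiff ℝ (⊤ : ℕ∞)
      (MeasureTheory.convolution f f ((ContinuousLinearMap.mul ℂ ℂ)) volume) := hconvd
  have hreal : ∀ ξ, (starRingEnd ℂ) (𝓕 f ξ) = 𝓕 f ξ := by
    intro ξ
    rw [Real.fourier_eq, ← integral_conj, ← integral_neg_eq_self]
    congr 1; ext v
    simp only [Circle.smul_def, smul_eq_mul, map_mul, inner_neg_left, neg_neg, f,
      Complex.conj_ofReal, ContDiffBump.normed_neg]
    congr 1
    rw [← Circle.coe_inv_eq_conj, ← AddChar.map_neg_eq_inv]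
  have hhalf : ∀ ξ : Ed d, ‖ξ‖ < R → 1 / 2 ≤ ‖𝓕 f ξ‖ := by
    intro ξ hξ
    have hint : ∫ v, f v = 1 := by
      simp only [f]
      rw [integral_complex_ofReal, b.integral_normed]; simp
    have hI : Integrable fun v => 𝐞 (-inner ℝ v ξ) • f v :=
      (Real.fourierIntegral_convergent_iff ξ).2 hfi
    have hd : ‖𝓕 f ξ - 1‖ ≤ 1 / 2 := by
      rw [← hint, Real.fourier_eq, ← integral_sub hI hfi]
      calc ‖∫ v, (𝐞 (-inner ℝ v ξ) • f v - f v)‖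
          ≤ ∫ v, (1 / 2) * b.normed volume v := by
            refine norm_integral_le_of_norm_le (b.integrable_normed.const_mul _)
              (Eventually.of_forall fun v => ?_)
            have e : 𝐞 (-inner ℝ v ξ) • f v - f v = ((𝐞 (-inner ℝ v ξ) : ℂ) - 1) * f v := by
              rw [Circle.smul_def, smul_eq_mul]; ring
            have nf : ‖f v‖ = b.normed volume v := by
              simp only [f, Complex.norm_real, Real.norm_eq_abs]
              exact abs_of_nonneg (b.nonneg_normed v)
            rw [e, norm_mul, nf]
            by_cases hv : ‖v‖ < ρ
            · refine mul_le_mul_of_nonneg_right ?_ (b.nonneg_normed v)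
              have h1 : ‖(𝐞 (-inner ℝ v ξ) : ℂ) - 1‖ ≤ ‖2 * Real.pi * (-inner ℝ v ξ)‖ := by
                rw [Real.fourierChar_apply, mul_comm]
                exact Real.norm_exp_I_mul_ofReal_sub_one_le
              refine h1.trans ?_
              have h2 : ‖inner ℝ v ξ‖ ≤ ρ * R :=
                (norm_inner_le_norm v ξ).trans (by gcongr)
              rw [norm_mul, norm_neg, Real.norm_of_nonneg (by positivity)]
              calc 2 * Real.pi * ‖inner ℝ v ξ‖ ≤ 2 * Real.pi * (ρ * R) := by gcongr
                _ = 1 / 2 := by rw [hρ]; field_simp; norm_num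
            · have : b.normed volume v = 0 := by
                rw [← Function.notMem_support, b.support_normed_eq]
                simpa [b] using hv
              rw [this]; simp
        _ = 1 / 2 := by rw [integral_const_mul, b.integral_normed, mul_one]
    have := norm_sub_norm_le (1 : ℂ) (𝓕 f ξ)
    rw [norm_sub_rev, norm_one] at this
    linarith
  refine ⟨hconvs.toSchwartzMap hconvd', hconvs, fun x => (𝓕 f x).re ^ 2, fun x => ?_⟩
  have hre : 𝓕 f x = ((𝓕 f x).re : ℂ) := (Complex.conj_eq_iff_re.1 (hreal x)).symm
  refine ⟨?_, sq_nonneg _, fun hx => ?_⟩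
  · rw [SchwartzMap.fourier_coe]
    change 𝓕 (MeasureTheory.convolution f f (ContinuousLinearMap.mul ℂ ℂ) volume) x = _
    rw [Real.fourier_mul_convolution_eq hfi hfi, hre]
    simp [sq]
  · have h1 := hhalf x hx
    rw [hre, Complex.norm_real, Real.norm_eq_abs] at h1
    change 1 / 4 ≤ (𝓕 f x).re ^ 2
    rw [← sq_abs]
    nlinarith

lemma exists_approx_kernel (d : ℕ) : ∃ A B : ℝ, 0 ≤ A ∧ 0 ≤ B ∧ ∀ n : ℝ, 0 < n →
    ∃ φ : SchwartzMap (Ed d) ℂ, HasCompactSupport φ ∧ ∫ u, (𝓕 φ) u = 1 ∧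
      ∫ u, ‖(𝓕 φ) u‖ ≤ A ∧ ∫ u, ‖u‖ * ‖(𝓕 φ) u‖ ≤ B / n := by
  let b : ContDiffBump (0 : Ed d) := ⟨1, 2, by positivity, by norm_num⟩
  let f : Ed d → ℂ := fun x => ((b x : ℝ) : ℂ)
  have hfs : HasCompactSupport f :=
    b.hasCompactSupport.comp_left (g := ((↑) : ℝ → ℂ)) (by simp)
  have hfd : ContDiff ℝ (⊤ : ℕ∞) f := Complex.ofRealCLM.contDiff.comp b.contDiff
  have hf0 : f 0 = 1 := by
    have : b 0 = 1 := b.one_of_mem_closedBall (by simp [b])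
    simp [f, this]
  let K := 𝓕 (hfs.toSchwartzMap hfd)
  refine ⟨∫ u, ‖K u‖, ∫ u, ‖u‖ * ‖K u‖, by positivity, by positivity, fun n hn => ?_⟩
  have h1 : HasCompactSupport (fun x : Ed d => f (n⁻¹ • x)) :=
    hfs.comp_smul (inv_ne_zero hn.ne')
  have h2 : ContDiff ℝ (⊤ : ℕ∞) (fun x : Ed d => f (n⁻¹ • x)) :=
    hfd.comp (by fun_prop)
  let m := Module.finrank ℝ (Ed d)
  have hKn : ∀ w, (𝓕 (h1.toSchwartzMap h2)) w = ((n ^ m : ℝ) : ℂ) * K (n • w) := by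
    intro w
    simp only [K]
    rw [SchwartzMap.fourier_coe, SchwartzMap.fourier_coe, Real.fourier_eq, Real.fourier_eq]
    have := Measure.integral_comp_inv_smul_of_nonneg (volume : Measure (Ed d))
      (fun v => 𝐞 (-inner ℝ v (n • w)) • f v) hn.le
    rw [Complex.real_smul] at this
    refine Eq.trans ?_ this
    congr 1; ext v
    change _ • f (n⁻¹ • v) = _
    congr 3
    rw [inner_smul_left, inner_smul_right]
    simp [hn.ne']
  have hn' : n ^ m * (n ^ m)⁻¹ = 1 := mul_inv_cancel₀ (by positivity)
  have hnn : ∀ w, ‖(𝓕 (h1.toSchwartzMap h2)) w‖ = n ^ m * ‖K (n • w)‖ := by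
    intro w
    rw [hKn, norm_mul, Complex.norm_real, Real.norm_of_nonneg (by positivity)]
  refine ⟨h1.toSchwartzMap h2, h1, ?_, ?_, ?_⟩
  · have e1 : 𝓕⁻ (𝓕 (h1.toSchwartzMap h2)) = h1.toSchwartzMap h2 :=
      FourierTransform.fourierInv_fourier_eq _
    have e2 := DFunLike.congr_fun e1 0
    rw [SchwartzMap.fourierInv_coe, Real.fourierInv_eq] at e2
    simp only [inner_zero_right, AddChar.map_zero_eq_one, one_smul] at e2
    rw [e2]
    change f (n⁻¹ • 0) = 1
    rw [smul_zero, hf0]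
  · simp_rw [hnn]
    rw [integral_const_mul, Measure.integral_comp_smul_of_nonneg volume (fun w => ‖K w‖) n (hR := hn.le),
      smul_eq_mul, ← mul_assoc, hn', one_mul]
  · simp_rw [hnn]
    have e : ∀ u : Ed d, ‖u‖ * (n ^ m * ‖K (n • u)‖) =
        (n ^ m / n) * (fun w => ‖w‖ * ‖K w‖) (n • u) := by
      intro u
      simp only [norm_smul, Real.norm_of_nonneg hn.le]
      field_simp
    simp_rw [e]
    rw [integral_const_mul, Measure.integral_comp_smul_of_nonneg volume (fun w => ‖w‖ * ‖K w‖) n (hR := hn.le),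
      smul_eq_mul, ← mul_assoc, div_mul_eq_mul_div, hn']
    apply le_of_eq; ring

lemma norm_mul_circle (a : ℂ) (z : Circle) : ‖a * (z : ℂ)‖ = ‖a‖ := by
  rw [norm_mul, Circle.norm_coe, mul_one]

lemma transl_bdd (μ ν : PPM (Ed d)) (hpos : μ.Nonneg) (hT : μ.temperate) (hν : ν.locFinite)
    (hF : IsFT μ ν) (R : ℝ) (hR : 0 < R) :
    ∃ C : ℝ, 0 ≤ C ∧ ∀ (t : Ed d) (B : ℝ) (F : Ed d → ℂ), (∀ y, ‖F y‖ ≤ B) →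
      (∀ y, R ≤ ‖y‖ → F y = 0) →
      (Summable fun x => ‖μ.mass x * F (t - x)‖) ∧ ∑' x, ‖μ.mass x * F (t - x)‖ ≤ B * C := by
  obtain ⟨φ, hφ, k, hk⟩ := exists_pos_kernel (d := d) R hR
  have hνs := nu_summable ν hν φ hφ
  refine ⟨4 * ∑' s, ‖ν.mass s * φ s‖, by positivity, fun t B F hB hF0 => ?_⟩
  have hB0 : 0 ≤ B := (norm_nonneg _).trans (hB 0)
  obtain ⟨h1, h2⟩ := conv_eq μ ν hT hF φ hφ t
  have e : ∀ x, μ.mass x * (𝓕 φ) (x - t) = ((‖μ.mass x‖ * k (x - t) : ℝ) : ℂ) := by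
    intro x
    rw [(hk _).1]
    conv_lhs => rw [hpos x]
    push_cast; rfl
  simp_rw [e] at h1 h2
  have hs : Summable fun x => ‖μ.mass x‖ * k (x - t) := Complex.summable_ofReal.1 h1
  have hle : ∑' x, ‖μ.mass x‖ * k (x - t) ≤ ∑' s, ‖ν.mass s * φ s‖ := by
    calc ∑' x, ‖μ.mass x‖ * k (x - t) ≤ ‖((∑' x, ‖μ.mass x‖ * k (x - t) : ℝ) : ℂ)‖ := by
          rw [Complex.norm_real]; exact Real.le_norm_self _
      _ = ‖∑' s, (ν.mass s * φ s) * (𝐞 (inner ℝ s t) : ℂ)‖ := by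
          rw [Complex.ofReal_tsum, h2]
      _ ≤ ∑' s, ‖(ν.mass s * φ s) * (𝐞 (inner ℝ s t) : ℂ)‖ := by
          apply norm_tsum_le_tsum_norm
          simp_rw [norm_mul_circle]; exact hνs
      _ = ∑' s, ‖ν.mass s * φ s‖ := by
          simp_rw [norm_mul_circle]
  have hp : ∀ x, ‖μ.mass x * F (t - x)‖ ≤ (B * 4) * (‖μ.mass x‖ * k (x - t)) := by
    intro x
    rw [norm_mul]
    by_cases hx : ‖t - x‖ < R
    · have h3 := (hk (x - t)).2.2 (by rwa [norm_sub_rev])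
      calc ‖μ.mass x‖ * ‖F (t - x)‖ ≤ ‖μ.mass x‖ * (B * (4 * k (x - t))) := by
            gcongr
            calc ‖F (t - x)‖ ≤ B * 1 := by simpa using hB _
              _ ≤ _ := by gcongr; linarith
        _ = _ := by ring
    · rw [hF0 _ (not_lt.1 hx), norm_zero, mul_zero]
      have := (hk (x - t)).2.1
      positivity
  have hs' := hs.mul_left (B * 4)
  have hs1 : Summable fun x => ‖μ.mass x * F (t - x)‖ :=
    Summable.of_nonneg_of_le (fun _ => norm_nonneg _) hp hs'
  refine ⟨hs1, (hs1.tsum_le_tsum hp hs').trans ?_⟩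
  rw [tsum_mul_left, mul_assoc]
  gcongr

lemma fubini_conv (μ : PPM (Ed d)) (ψ K : Ed d → ℂ) (hc : Continuous ψ) (B M : ℝ)
    (hB : ∀ y, ‖ψ y‖ ≤ B) (hK : Integrable K)
    (hM : ∀ t, (Summable fun x => ‖μ.mass x * ψ (t - x)‖) ∧ ∑' x, ‖μ.mass x * ψ (t - x)‖ ≤ M)
    (t : Ed d) :
    ∫ u, K u * μ.conv ψ (t + u) = ∫ w, ψ w * ∑' x, μ.mass x * K (x - (t - w)) := by
  let S := Function.support μ.mass
  have : Countable S := μ.countable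
  let P : S → Ed d → ℂ := fun x u => K u * (μ.mass x * ψ (t + u - x))
  let Q : S → Ed d → ℂ := fun x w => ψ w * (μ.mass x * K (x - (t - w)))
  have hQP : ∀ x w, Q x w = P x (w + (x - t)) := by
    intro x w
    simp only [P, Q]
    have e1 : (x : Ed d) - (t - w) = w + (x - t) := by abel
    have e2 : t + (w + (x - t)) - x = w := by abel
    rw [e1, e2]; ring
  have hPi : ∀ x, Integrable (P x) := by
    intro x
    refine hK.mul_bdd (c := ‖μ.mass x‖ * B) ?_ (Eventually.of_forall fun u => ?_)
    · apply Continuous.aestronglyMeasurable; fun_prop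
    · rw [norm_mul]; gcongr; exact hB _
  have hQi : ∀ x, Integrable (Q x) := by
    intro x
    have : Q x = fun w => P x (w + (x - t)) := funext (hQP x)
    rw [this]; exact (hPi x).comp_add_right _
  have hPs : Summable fun x => ∫ u, ‖P x u‖ := by
    refine summable_of_sum_le (c := ∫ u, ‖K u‖ * M) (fun x => by positivity) (fun F => ?_)
    rw [← integral_finsetSum _ (fun x _ => (hPi x).norm)]
    refine integral_mono (integrable_finsetSum _ (fun x _ => (hPi x).norm))
      (hK.norm.mul_const M) (fun u => ?_)
    simp only [P]
    simp_rw [norm_mul (K u)]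
    rw [← Finset.mul_sum]
    gcongr
    have h1 : Summable fun x : S => ‖μ.mass x * ψ (t + u - x)‖ := (hM (t + u)).1.subtype _
    exact (h1.sum_le_tsum F (fun _ _ => norm_nonneg _)).trans
      ((Summable.tsum_subtype_le (fun x => ‖μ.mass x * ψ (t + u - x)‖) S
        (fun _ => norm_nonneg _) (hM (t + u)).1).trans (hM (t + u)).2)
  have hQs : Summable fun x => ∫ u, ‖Q x u‖ := by
    refine hPs.congr (fun x => ?_)
    simp_rw [hQP]
    exact (integral_add_right_eq_self (fun u => ‖P x u‖) _).symm
  have i1 := integral_tsum_of_summable_integral_norm hPi hPs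
  have i2 := integral_tsum_of_summable_integral_norm hQi hQs
  have i3 : ∑' x, ∫ u, P x u = ∑' x, ∫ u, Q x u := by
    congr 1; ext x
    simp_rw [hQP]
    exact (integral_add_right_eq_self (fun u => P x u) _).symm
  have s1 : ∀ u, ∑' x : S, P x u = K u * μ.conv ψ (t + u) := by
    intro u
    simp only [P, PPM.conv]
    rw [tsum_mul_left]
    congr 1
    exact tsum_subtype_eq_of_support_subset (f := fun x => μ.mass x * ψ (t + u - x))
      (Function.support_mul_subset_left _ _)
  have s2 : ∀ w, ∑' x : S, Q x w = ψ w * ∑' x, μ.mass x * K (x - (t - w)) := by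
    intro w
    simp only [Q]
    rw [tsum_mul_left]
    congr 1
    exact tsum_subtype_eq_of_support_subset (f := fun x => μ.mass x * K (x - (t - w)))
      (Function.support_mul_subset_left _ _)
  simp_rw [s1] at i1
  simp_rw [s2] at i2
  rw [← i1, i3, i2]

/-- For a non-negative Poisson measure `μ` on `ℝ^d` and every continuous
compactly supported `ψ`, the convolution `(μ ⋆ ψ)(t) = ∫ ψ(t-x) dμ(x)` is well defined and is
a Bohr almost periodic function of `t`; that is, `μ` is an almost periodic measure. -/
theorem statement0 {d : ℕ} (μ : PPM (Ed d)) (hpos : μ.Nonneg) (hP : IsPoisson μ)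
    (ψ : Ed d → ℂ) (hc : Continuous ψ) (hs : HasCompactSupport ψ) :
    (∀ t : Ed d, Summable fun x => μ.mass x * ψ (t - x)) ∧ IsBohrAP (μ.conv ψ) := by
  obtain ⟨-, hT, ν, hν, hF⟩ := hP
  obtain ⟨R0, hR0⟩ := hs.isCompact.isBounded.subset_ball 0
  set R := max R0 1 with hRdef
  have hR : 0 < R := lt_max_of_lt_right one_pos
  obtain ⟨Bψ, hB⟩ := hs.exists_bound_of_continuous hc
  have hψ0 : ∀ y, R ≤ ‖y‖ → ψ y = 0 := fun y hy =>
    image_eq_zero_of_notMem_tsupport fun h => by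
      have := hR0 h
      rw [mem_ball_zero_iff] at this
      exact absurd (this.trans_le (le_max_left R0 1)) (not_lt.2 hy)
  obtain ⟨C, hC0, hC⟩ := transl_bdd μ ν hpos hT hν hF R hR
  obtain ⟨C', hC'0, hC'⟩ := transl_bdd μ ν hpos hT hν hF (R + 1) (by positivity)
  have hM : ∀ t, (Summable fun x => ‖μ.mass x * ψ (t - x)‖) ∧
      ∑' x, ‖μ.mass x * ψ (t - x)‖ ≤ Bψ * C := fun t => hC t Bψ ψ hB hψ0
  set M := Bψ * C with hMdef
  have hM0 : 0 ≤ M := (tsum_nonneg fun _ => norm_nonneg _).trans (hM 0).2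
  have hsum : ∀ t : Ed d, Summable fun x => μ.mass x * ψ (t - x) := fun t =>
    Summable.of_norm (hM t).1
  have hgb : ∀ t, ‖μ.conv ψ t‖ ≤ M := fun t =>
    (norm_tsum_le_tsum_norm (hM t).1).trans (hM t).2
  -- uniform continuity
  have hψu := hs.uniformContinuous_of_continuous hc
  have hgu : ∀ η : ℝ, 0 < η → ∃ δ > 0, ∀ t z : Ed d, ‖z‖ < δ →
      ‖μ.conv ψ (t + z) - μ.conv ψ t‖ ≤ η := by
    intro η hη
    obtain ⟨δ, hδ, h⟩ := Metric.uniformContinuous_iff.1 hψu (η / (C' + 1)) (by positivity)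
    refine ⟨min δ 1, by positivity, fun t z hz => ?_⟩
    obtain ⟨k1, k2⟩ := hC' t (η / (C' + 1)) (fun y => ψ (y + z) - ψ y) (fun y => by
        have := h (a := y + z) (b := y) (by simpa using hz.trans_le (min_le_left _ _))
        rw [dist_eq_norm] at this
        exact this.le) (fun y hy => by
        have hz1 := hz.trans_le (min_le_right δ 1)
        rw [hψ0 y (by linarith), hψ0 (y + z) ?_, sub_zero]
        have := norm_sub_norm_le y (-z)
        rw [sub_neg_eq_add, norm_neg] at this
        linarith)
    have e : μ.conv ψ (t + z) - μ.conv ψ t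
        = ∑' x, μ.mass x * (ψ (t - x + z) - ψ (t - x)) := by
      simp only [PPM.conv]
      rw [← (hsum _).tsum_sub (hsum _)]
      congr 1; ext x
      rw [mul_sub, show t + z - x = t - x + z by abel]
    rw [e]
    refine (norm_tsum_le_tsum_norm k1).trans (k2.trans ?_)
    rw [div_mul_eq_mul_div, div_le_iff₀ (by positivity)]
    nlinarith
  have hgc : Continuous (μ.conv ψ) := by
    rw [Metric.continuous_iff]
    intro t ε hε
    obtain ⟨δ, hδ, h⟩ := hgu (ε / 2) (by positivity)
    refine ⟨δ, hδ, fun a ha => ?_⟩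
    have := h t (a - t) (by rwa [← dist_eq_norm])
    rw [add_sub_cancel, ← dist_eq_norm] at this
    linarith
  refine ⟨hsum, hgc, fun ε hε => ?_⟩
  obtain ⟨A, B, hA, hB0, hker⟩ := exists_approx_kernel d
  set η := ε / (8 * (A + 1)) with hη
  have hη0 : 0 < η := by positivity
  obtain ⟨δ, hδ, hgδ⟩ := hgu η hη0
  have hglip : ∀ t u, ‖μ.conv ψ (t + u) - μ.conv ψ t‖ ≤ η + (2 * M / δ) * ‖u‖ := by
    intro t u
    by_cases hu : ‖u‖ < δ
    · have := hgδ t u hu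
      have : 0 ≤ (2 * M / δ) * ‖u‖ := by positivity
      linarith
    · have h1 := norm_sub_le (μ.conv ψ (t + u)) (μ.conv ψ t)
      have h2 := hgb (t + u)
      have h3 := hgb t
      have h4 : 2 * M ≤ (2 * M / δ) * ‖u‖ := by
        rw [div_mul_eq_mul_div, le_div_iff₀ hδ]
        exact mul_le_mul_of_nonneg_left (not_lt.1 hu) (by positivity)
      linarith
  set n : ℝ := 16 * M * B / (δ * ε) + 1 with hn
  have hn0 : 0 < n := by positivity
  obtain ⟨φ, hφ, hφ1, hφA, hφB⟩ := hker n hn0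
  have hKi : Integrable (fun u => (𝓕 φ) u) := (𝓕 φ).integrable
  have hKi1 : Integrable (fun u => ‖u‖ * ‖(𝓕 φ) u‖) := by
    have := (𝓕 φ).integrable_pow_mul volume 1
    simp only [pow_one] at this
    exact this
  have hKg : ∀ t, Integrable fun u => (𝓕 φ) u * μ.conv ψ (t + u) := fun t =>
    hKi.mul_bdd (c := M) (Continuous.aestronglyMeasurable (by fun_prop))
      (Eventually.of_forall fun u => hgb _)
  have happ : ∀ t, ‖(∫ u, (𝓕 φ) u * μ.conv ψ (t + u)) - μ.conv ψ t‖ ≤ ε / 4 := by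
    intro t
    have e1 : μ.conv ψ t = ∫ u, (𝓕 φ) u * μ.conv ψ t := by
      rw [integral_mul_const, hφ1, one_mul]
    have e2 : (∫ u, (𝓕 φ) u * μ.conv ψ (t + u)) - μ.conv ψ t
        = ∫ u, ((𝓕 φ) u * μ.conv ψ (t + u) - (𝓕 φ) u * μ.conv ψ t) := by
      rw [integral_sub (hKg t) (hKi.mul_const _), ← e1]
    rw [e2]
    calc _ ≤ ∫ u, (η * ‖(𝓕 φ) u‖ + (2 * M / δ) * (‖u‖ * ‖(𝓕 φ) u‖)) := by
          refine norm_integral_le_of_norm_le ((hKi.norm.const_mul _).add (hKi1.const_mul _))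
            (Eventually.of_forall fun u => ?_)
          rw [← mul_sub, norm_mul]
          have := mul_le_mul_of_nonneg_left (hglip t u) (norm_nonneg ((𝓕 φ) u))
          refine this.trans (le_of_eq ?_)
          ring
      _ = η * (∫ u, ‖(𝓕 φ) u‖) + (2 * M / δ) * (∫ u, ‖u‖ * ‖(𝓕 φ) u‖) := by
          rw [integral_add (hKi.norm.const_mul _) (hKi1.const_mul _), integral_const_mul,
            integral_const_mul]
      _ ≤ η * A + (2 * M / δ) * (B / n) := by gcongr
      _ ≤ ε / 8 + ε / 8 := by
          gcongr
          · rw [hη, div_mul_eq_mul_div, div_le_div_iff₀ (by positivity) (by positivity)]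
            nlinarith
          · rw [div_mul_div_comm, div_le_div_iff₀ (by positivity) (by positivity)]
            have : δ * ε * n = 16 * M * B + δ * ε := by
              rw [hn]; field_simp
            nlinarith [mul_pos hδ hε]
      _ = ε / 4 := by ring
  -- the almost periodic function
  have hνs := nu_summable ν hν φ hφ
  let h : Ed d → ℂ := fun t => ∑' x, μ.mass x * (𝓕 φ) (x - t)
  have hh : ∀ t, h t = ∑' s, (ν.mass s * φ s) * (𝐞 (inner ℝ s t) : ℂ) := fun t =>
    (conv_eq μ ν hT hF φ hφ t).2
  have hhc : Continuous h := by
    rw [show h = _ from funext hh]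
    refine continuous_tsum (fun s => ?_) hνs (fun s t => ?_)
    · have := Real.continuous_fourierChar
      fun_prop
    · rw [norm_mul_circle]
  have hfub : ∀ t, ∫ u, (𝓕 φ) u * μ.conv ψ (t + u) = ∫ w, ψ w * h (t - w) := fun t =>
    fubini_conv μ ψ (fun u => (𝓕 φ) u) hc Bψ M hB hKi hM t
  have hψh : ∀ t, Integrable fun w => ψ w * h (t - w) := fun t =>
    Continuous.integrable_of_hasCompactSupport (by fun_prop) hs.mul_right
  have hψi : Integrable ψ := hc.integrable_of_hasCompactSupport hs
  set P := ∫ w, ‖ψ w‖ with hP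
  have hP0 : 0 ≤ P := by positivity
  obtain ⟨L, hL, hap⟩ := ap_trig (fun s => ν.mass s * φ s) hνs (ε / (4 * (P + 1)))
    (by positivity)
  refine ⟨L, hL, fun x => ?_⟩
  obtain ⟨τ, hτ, hper⟩ := hap x
  refine ⟨τ, hτ, fun y => ?_⟩
  have hd : ‖(∫ w, ψ w * h (y + τ - w)) - ∫ w, ψ w * h (y - w)‖ ≤ ε / 4 := by
    rw [← integral_sub (hψh _) (hψh _)]
    calc _ ≤ ∫ w, ‖ψ w‖ * (ε / (4 * (P + 1))) := by
          refine norm_integral_le_of_norm_le (hψi.norm.mul_const _)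
            (Eventually.of_forall fun w => ?_)
          rw [← mul_sub, norm_mul]
          gcongr
          rw [hh, hh, show y + τ - w = y - w + τ by abel]
          exact (hper (y - w)).le
      _ = P * (ε / (4 * (P + 1))) := by rw [integral_mul_const]
      _ ≤ ε / 4 := by
          rw [mul_div_assoc', div_le_div_iff₀ (by positivity) (by positivity)]
          nlinarith
  have a1 := happ (y + τ)
  have a2 := happ y
  rw [hfub] at a1 a2
  have key : μ.conv ψ (y + τ) - μ.conv ψ y
      = ((∫ w, ψ w * h (y + τ - w)) - ∫ w, ψ w * h (y - w))
        - ((∫ w, ψ w * h (y + τ - w)) - μ.conv ψ (y + τ))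
        + ((∫ w, ψ w * h (y - w)) - μ.conv ψ y) := by ring
  rw [key]
  refine lt_of_le_of_lt (norm_add_le _ _) ?_
  have := norm_sub_le ((∫ w, ψ w * h (y + τ - w)) - ∫ w, ψ w * h (y - w))
    ((∫ w, ψ w * h (y + τ - w)) - μ.conv ψ (y + τ))
  linarith

end
end

section
/- Let μ and ν be two non-negative Poisson measures on ℝ^d, and let B(x_n, R_n) ⊂ ℝ^d be a sequence of balls with R_n → ∞ as n → ∞. If either |μ−ν|(B(x_n,R_n)) = o(R_n^d) as n → ∞, or |μ̂−ν̂|(B(x_n,R_n)) = o(R_n^d) as n → ∞, then μ = ν. -/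
open MeasureTheory Metric Filter Topology Complex SchwartzMap Bornology
open scoped RealInnerProductSpace ENNReal

noncomputable section

variable {d : ℕ}

/-- Total variation of the difference of two pure point measures, on a set. -/
def dvar {V : Type*} (μ ν : PPM V) (A : Set V) : ℝ≥0∞ :=
  ∑' x : A, (‖μ.mass x - ν.mass x‖₊ : ℝ≥0∞)

open FourierTransform in
lemma aux_contDiff (f : Ed d → ℂ) (hf : ContDiff ℝ (⊤ : ℕ∞) f) (r : ℝ) (b c : Ed d) :
    ContDiff ℝ (⊤ : ℕ∞) (fun y : Ed d => ((Real.fourierChar (⟪c, y⟫) : Circle) : ℂ) * f (r • (y - b))) := by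
  refine ContDiff.mul ?_ (hf.comp (by fun_prop))
  simp only [Real.fourierChar_apply]
  refine Complex.contDiff_exp.comp ?_
  refine ContDiff.mul ?_ contDiff_const
  refine Complex.ofRealCLM.contDiff.comp ?_
  exact contDiff_const.mul (contDiff_const.inner ℝ contDiff_id)

lemma aux_cs (f : Ed d → ℂ) (hf : HasCompactSupport f) (r : ℝ) (hr : 0 < r) (b c : Ed d) :
    HasCompactSupport
      (fun y : Ed d => ((Real.fourierChar (⟪c, y⟫) : Circle) : ℂ) * f (r • (y - b))) := by
  have : HasCompactSupport (fun y : Ed d => f (r • (y - b))) := by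
    have := hf.comp_homeomorph ((Homeomorph.subRight b).trans (Homeomorph.smulOfNeZero r hr.ne'))
    exact this
  exact this.mul_left

open FourierTransform in
lemma aux_ft (f : Ed d → ℂ) (r : ℝ) (hr : 0 < r) (b c x : Ed d) :
    𝓕 (fun y : Ed d => ((Real.fourierChar (⟪c, y⟫) : Circle) : ℂ) * f (r • (y - b))) x
     = ((Real.fourierChar (-⟪b, x - c⟫) : Circle) : ℂ) * ((((r ^ d)⁻¹ : ℝ) : ℂ)
        * 𝓕 f (r⁻¹ • (x - c))) := by
  rw [Real.fourier_eq', Real.fourier_eq']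
  rw [← integral_add_right_eq_self _ b]
  have h2 := Measure.integral_comp_smul (volume : Measure (Ed d))
    (fun z : Ed d => cexp (↑(-2 * Real.pi * ⟪z, r⁻¹ • (x - c)⟫) * Complex.I) • f z) r
  rw [finrank_euclideanSpace_fin, abs_of_pos (by positivity)] at h2
  rw [← Complex.real_smul, ← h2, ← integral_const_mul]
  congr 1
  ext y
  simp only [Real.fourierChar_apply, smul_eq_mul, add_sub_cancel_right]
  rw [← mul_assoc, ← mul_assoc, ← Complex.exp_add, ← Complex.exp_add]
  congr 2
  simp only [inner_add_left, inner_add_right, inner_smul_left, inner_smul_right, inner_sub_right, real_inner_comm c]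
  have : (r : ℂ) ≠ 0 := by exact_mod_cast hr.ne'
  push_cast
  simp
  field_simp
  ring

open FourierTransform in
lemma aux_key {L Lh : PPM (Ed d)} (hFT : IsFT L Lh) (f : Ed d → ℂ) (hf : ContDiff ℝ (⊤ : ℕ∞) f)
    (hc : HasCompactSupport f) (r : ℝ) (hr : 0 < r) (b c : Ed d) :
    ∑' x, L.mass x * (((Real.fourierChar (-⟪b, x - c⟫) : Circle) : ℂ) * ((((r ^ d)⁻¹ : ℝ) : ℂ)
        * 𝓕 f (r⁻¹ • (x - c))))
     = ∑' y, Lh.mass y * (((Real.fourierChar (⟪c, y⟫) : Circle) : ℂ) * f (r • (y - b))) := by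
  have := hFT ((aux_cs f hc r hr b c).toSchwartzMap (aux_contDiff f hf r b c))
    (aux_cs f hc r hr b c)
  simp only [PPM.pair, fourierCLE_apply, SchwartzMap.fourier_coe] at this
  simp_rw [← aux_ft f r hr b c]
  exact this

open FourierTransform in
lemma aux_summable {L : PPM (Ed d)} (hL : L.temperate) (f : Ed d → ℂ) (hf : ContDiff ℝ (⊤ : ℕ∞) f)
    (hc : HasCompactSupport f) (r : ℝ) (hr : 0 < r) (b c : Ed d) :
    Summable fun x => L.mass x * (((Real.fourierChar (-⟪b, x - c⟫) : Circle) : ℂ) *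
      ((((r ^ d)⁻¹ : ℝ) : ℂ) * 𝓕 f (r⁻¹ • (x - c)))) := by
  have := hL (𝓕 ((aux_cs f hc r hr b c).toSchwartzMap (aux_contDiff f hf r b c)))
  simp only [SchwartzMap.fourier_coe] at this
  simp_rw [← aux_ft f r hr b c]
  exact this

open FourierTransform in
lemma aux_decay (f : Ed d → ℂ) (hf : ContDiff ℝ (⊤ : ℕ∞) f) (hc : HasCompactSupport f) (k : ℕ) :
    ∃ C : ℝ, 0 < C ∧ ∀ u, (1 + ‖u‖) ^ k * ‖𝓕 f u‖ ≤ C := by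
  obtain ⟨C, hC⟩ : ∃ C : ℝ, ∀ u, (1 + ‖u‖) ^ k * ‖𝓕 f u‖ ≤ C := by
    refine ⟨2 ^ k * (Finset.Iic (k, 0)).sup (fun m => SchwartzMap.seminorm ℝ m.1 m.2)
      (𝓕 (hc.toSchwartzMap hf)), fun u => ?_⟩
    have := one_add_le_sup_seminorm_apply (𝕜 := ℝ) (m := (k, 0)) le_rfl le_rfl
      (𝓕 (hc.toSchwartzMap hf)) u
    rw [norm_iteratedFDeriv_zero, SchwartzMap.fourier_coe] at this
    exact this
  exact ⟨max C 1, by positivity, fun u => (hC u).trans (le_max_left _ _)⟩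

open FourierTransform in
lemma aux_bump (d : ℕ) : ∃ h : Ed d → ℂ, ContDiff ℝ (⊤ : ℕ∞) h ∧ HasCompactSupport h ∧
    Function.support h ⊆ ball 0 1 ∧ (∀ y, ‖h y‖ ≤ 1) ∧ h 0 = 1 ∧ 𝓕 h 0 ≠ 0 ∧
    ∀ u, (𝓕 h u).im = 0 := by
  let B : ContDiffBump (0 : Ed d) := ⟨1/4, 1/2, by norm_num, by norm_num⟩
  refine ⟨fun y => (B y : ℂ), Complex.ofRealCLM.contDiff.comp B.contDiff,
    B.hasCompactSupport.comp_left (g := fun t : ℝ => (t : ℂ)) (by simp), ?_, ?_, ?_, ?_, ?_⟩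
  · intro y hy
    have : y ∈ Function.support B := by
      simpa using hy
    rw [B.support_eq] at this
    exact ball_subset_ball (by norm_num [B]) this
  · intro y
    simp only [Complex.norm_real, Real.norm_eq_abs, abs_of_nonneg B.nonneg]
    exact B.le_one
  · simp [B.one_of_mem_closedBall (x := 0) (by norm_num [B])]
  · rw [Real.fourier_eq']
    simp only [inner_zero_right, mul_zero, ofReal_zero, zero_mul, Complex.exp_zero, one_smul]
    rw [integral_complex_ofReal]
    exact_mod_cast B.integral_pos.ne'
  · intro u
    rw [← Complex.conj_eq_iff_im, Real.fourier_eq', ← integral_conj]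
    rw [← integral_neg_eq_self]
    congr 1
    ext y
    simp only [smul_eq_mul, map_mul, Complex.conj_ofReal, B.neg, ← Complex.exp_conj, Complex.conj_I,
      inner_neg_left]
    simp

lemma var_eq (L : PPM (Ed d)) (A : Set (Ed d)) :
    L.var A = ∑' x, A.indicator (fun x => ‖L.mass x‖ₑ) x := by
  rw [← tsum_subtype]; rfl

lemma aux_bound (L : PPM (Ed d)) (g : Ed d → ℂ) (A : Set (Ed d)) (M : ℝ) (hM : ∀ y, ‖g y‖ ≤ M)
    (hA : Function.support g ⊆ A) :
    ∑' y, ‖L.mass y * g y‖ₑ ≤ ENNReal.ofReal M * L.var A := by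
  rw [var_eq, ← ENNReal.tsum_mul_left]
  refine ENNReal.tsum_le_tsum fun y => ?_
  by_cases hy : y ∈ A
  · rw [Set.indicator_of_mem hy, enorm_mul, mul_comm]
    gcongr
    rw [← ofReal_norm]
    exact ENNReal.ofReal_le_ofReal (hM y)
  · have : g y = 0 := by
      by_contra h
      exact hy (hA h)
    simp [this]

lemma enorm_tsum_le' (g : Ed d → ℂ) : ‖∑' y, g y‖ₑ ≤ ∑' y, ‖g y‖ₑ := by
  exact enorm_tsum_le_tsum_enorm

open FourierTransform ContinuousLinearMap Convolution in
lemma aux_pd (d : ℕ) : ∃ f : Ed d → ℂ, ContDiff ℝ (⊤ : ℕ∞) f ∧ HasCompactSupport f ∧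
    (∀ u, 𝓕 f u = ((‖𝓕 f u‖ : ℝ) : ℂ)) ∧ 
    ∃ δ : ℝ, 0 < δ ∧ δ ≤ 1 ∧ ∃ a : ℝ, 0 < a ∧ ∀ u, ‖u‖ < δ → a ≤ ‖𝓕 f u‖ := by
  obtain ⟨h, h1, h2, h3, h4, h5, h6, h7⟩ := aux_bump d
  have hi : Integrable h := h1.continuous.integrable_of_hasCompactSupport h2
  have hF : ∀ u, 𝓕 (h ⋆[mul ℂ ℂ] h) u = 𝓕 h u * 𝓕 h u := fun u =>
    Real.fourier_mul_convolution_eq hi hi u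
  refine ⟨h ⋆[mul ℂ ℂ] h, ?_, ?_, ?_, ?_⟩
  · exact h2.contDiff_convolution_right ((mul ℂ ℂ).bilinearRestrictScalars ℝ) (n := (⊤ : ℕ∞)) (hi.locallyIntegrable) h1
  · exact HasCompactSupport.convolution _ h2 h2
  · intro u
    rw [hF, norm_mul]
    have : 𝓕 h u = (((𝓕 h u).re : ℝ) : ℂ) := by
      apply Complex.ext <;> simp [h7 u]
    rw [this]
    simp only [Complex.norm_real, Real.norm_eq_abs, abs_mul_abs_self]
    push_cast
    rfl
  · have hc : Continuous (fun u => ‖𝓕 h u‖) := by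
      have := (𝓕 (h2.toSchwartzMap h1)).continuous
      rw [SchwartzMap.fourier_coe] at this
      exact this.norm
    have hpos : 0 < ‖𝓕 h 0‖ := norm_pos_iff.2 h6
    have := (hc.tendsto 0).eventually (lt_mem_nhds (half_lt_self hpos))
    rw [Metric.eventually_nhds_iff] at this
    obtain ⟨δ, hδ, H⟩ := this
    refine ⟨min δ 1, by positivity, min_le_right _ _, (‖𝓕 h 0‖/2)*(‖𝓕 h 0‖/2), by positivity, ?_⟩
    intro u hu
    have := H (y := u) (by rw [dist_zero_right]; exact hu.trans_le (min_le_left _ _))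
    rw [hF, norm_mul]
    gcongr

open FourierTransform in
lemma aux_growth {μ μh : PPM (Ed d)} (hpos : μ.Nonneg) (ht : μ.temperate) (hlf : μh.locFinite)
    (hFT : IsFT μ μh) : ∃ C : ℝ≥0∞, C ≠ ⊤ ∧ ∀ c : Ed d, ∀ R : ℝ, 1 ≤ R →
      μ.var (ball c R) ≤ C * ENNReal.ofReal (R ^ d) := by
  obtain ⟨f, f1, f2, f3, δ, hδ, hδ1, a, ha, f4⟩ := aux_pd d
  obtain ⟨M, hM⟩ := f1.continuous.bounded_above_of_compact_support f2
  obtain ⟨ρ, hρ⟩ := f2.isCompact.isBounded.subset_ball 0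
  refine ⟨ENNReal.ofReal (a⁻¹ * (δ⁻¹)^d) * (ENNReal.ofReal M * μh.var (ball 0 ρ)),
    ENNReal.mul_ne_top ENNReal.ofReal_ne_top (ENNReal.mul_ne_top ENNReal.ofReal_ne_top (hlf ρ).ne),
    fun c R hR => ?_⟩
  set r : ℝ := R * δ⁻¹ with hr
  have hr1 : 1 ≤ r := by
    have : 1 ≤ δ⁻¹ := (one_le_inv₀ hδ).2 hδ1
    nlinarith
  have hr0 : 0 < r := by linarith
  have key := aux_key hFT f f1 f2 r hr0 0 c
  have hs := aux_summable ht f f1 f2 r hr0 0 c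
  have hb : ‖∑' y, μh.mass y * (((Real.fourierChar (⟪c, y⟫) : Circle) : ℂ) * f (r • (y - 0)))‖ₑ
      ≤ ENNReal.ofReal M * μh.var (ball 0 ρ) := by
    refine (enorm_tsum_le' _).trans (aux_bound _ _ _ _ ?_ ?_)
    · intro y
      rw [norm_mul, Circle.norm_coe, one_mul]
      exact hM _
    · intro y hy
      have : f (r • y) ≠ 0 := by
        intro h; apply hy; simp [h]
      have := hρ (subset_tsupport _ this)
      rw [mem_ball_zero_iff, norm_smul, Real.norm_of_nonneg hr0.le] at this
      rw [mem_ball_zero_iff]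
      nlinarith [norm_nonneg y]
  rw [← key] at hb
  have hterm : ∀ x, μ.mass x * (((Real.fourierChar (-⟪(0 : Ed d), x - c⟫) : Circle) : ℂ) *
      ((((r ^ d)⁻¹ : ℝ) : ℂ) * 𝓕 f (r⁻¹ • (x - c)))) =
      ((‖μ.mass x‖ * ((r ^ d)⁻¹ * ‖𝓕 f (r⁻¹ • (x - c))‖) : ℝ) : ℂ) := by
    intro x
    rw [hpos x, f3]
    simp
  simp_rw [hterm] at hb hs
  rw [← Complex.ofReal_tsum] at hb
  have hs' := Complex.summable_ofReal.1 hs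
  have hnn : ∀ x, 0 ≤ ‖μ.mass x‖ * ((r ^ d)⁻¹ * ‖𝓕 f (r⁻¹ • (x - c))‖) := fun x => by positivity
  rw [← ofReal_norm, Complex.norm_real, Real.norm_of_nonneg (tsum_nonneg hnn),
    ENNReal.ofReal_tsum_of_nonneg hnn hs'] at hb
  have hlow : μ.var (ball c R) ≤ ENNReal.ofReal (r ^ d * a⁻¹) *
      ∑' x, ENNReal.ofReal (‖μ.mass x‖ * ((r ^ d)⁻¹ * ‖𝓕 f (r⁻¹ • (x - c))‖)) := by
    rw [var_eq, ← ENNReal.tsum_mul_left]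
    refine ENNReal.tsum_le_tsum fun x => ?_
    by_cases hx : x ∈ ball c R
    · rw [Set.indicator_of_mem hx, ← ofReal_norm, ← ENNReal.ofReal_mul (by positivity)]
      apply ENNReal.ofReal_le_ofReal
      have h1 : a ≤ ‖𝓕 f (r⁻¹ • (x - c))‖ := by
        apply f4
        rw [norm_smul, Real.norm_of_nonneg (by positivity), ← dist_eq_norm, inv_mul_lt_iff₀ hr0, hr]
        rw [mem_ball] at hx
        field_simp
        exact hx
      have : r ^ d * a⁻¹ * (‖μ.mass x‖ * ((r ^ d)⁻¹ * ‖𝓕 f (r⁻¹ • (x - c))‖)) =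
        ‖μ.mass x‖ * (‖𝓕 f (r⁻¹ • (x - c))‖ / a) := by
        field_simp
      rw [this]
      refine le_mul_of_one_le_right (norm_nonneg _) ?_
      rwa [one_le_div ha]
    · rw [Set.indicator_of_notMem hx]; exact zero_le
  refine hlow.trans ((mul_le_mul_right hb _).trans (le_of_eq ?_))
  have : r ^ d * a⁻¹ = (a⁻¹ * δ⁻¹ ^ d) * R ^ d := by rw [hr]; ring
  rw [this, ENNReal.ofReal_mul (by positivity)]
  ring

lemma aux_K {L : PPM (Ed d)} (hg : ∃ C : ℝ≥0∞, C ≠ ⊤ ∧ ∀ c : Ed d, ∀ R : ℝ, 1 ≤ R →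
      L.var (ball c R) ≤ C * ENNReal.ofReal (R ^ d)) :
    ∃ C : ℝ≥0∞, C ≠ ⊤ ∧ ∀ c : Ed d, ∀ R : ℝ, 1 ≤ R →
      ∑' x, ‖L.mass x‖ₑ * ENNReal.ofReal (((1 + ‖R⁻¹ • (x - c)‖) ^ (d + 1))⁻¹)
        ≤ C * ENNReal.ofReal (R ^ d) := by
  obtain ⟨C, hC, H⟩ := hg
  refine ⟨C * ENNReal.ofReal (2 ^ d * 2), ENNReal.mul_ne_top hC ENNReal.ofReal_ne_top,
    fun c R hR => ?_⟩
  have hR0 : 0 < R := by linarith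
  have h1 : ∀ x, ‖L.mass x‖ₑ * ENNReal.ofReal (((1 + ‖R⁻¹ • (x - c)‖) ^ (d + 1))⁻¹) ≤
      ∑' k : ℕ, ENNReal.ofReal (((2 ^ k) ^ (d + 1))⁻¹) *
        (ball c (2 ^ (k + 1) * R)).indicator (fun x => ‖L.mass x‖ₑ) x := by
    intro x
    obtain ⟨k, hk1, hk2⟩ := exists_nat_pow_near (x := 1 + ‖R⁻¹ • (x - c)‖) (y := (2 : ℝ))
      (by simp) (by norm_num)
    refine le_trans ?_ (ENNReal.le_tsum k)
    have hx : x ∈ ball c (2 ^ (k + 1) * R) := by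
      rw [norm_smul, Real.norm_of_nonneg (by positivity), ← dist_eq_norm] at hk2
      have : R⁻¹ * dist x c < 2 ^ (k + 1) := by linarith
      rw [inv_mul_lt_iff₀ hR0] at this
      rw [mem_ball]; linarith
    rw [Set.indicator_of_mem hx, mul_comm]
    gcongr
  calc _ ≤ ∑' x, ∑' k : ℕ, ENNReal.ofReal (((2 ^ k) ^ (d + 1))⁻¹) *
        (ball c (2 ^ (k + 1) * R)).indicator (fun x => ‖L.mass x‖ₑ) x :=
        ENNReal.tsum_le_tsum h1
    _ = ∑' k : ℕ, ENNReal.ofReal (((2 ^ k) ^ (d + 1))⁻¹) * L.var (ball c (2 ^ (k + 1) * R)) := by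
        rw [ENNReal.tsum_comm]
        simp_rw [ENNReal.tsum_mul_left, ← var_eq]
    _ ≤ ∑' k : ℕ, (C * ENNReal.ofReal (2 ^ d) * ENNReal.ofReal (R ^ d)) *
          ENNReal.ofReal ((1 / 2) ^ k) := by
        refine ENNReal.tsum_le_tsum fun k => ?_
        have h2 : 1 ≤ 2 ^ (k + 1) * R := by
          have : (1 : ℝ) ≤ 2 ^ (k + 1) := one_le_pow₀ (by norm_num)
          nlinarith
        refine (mul_le_mul_right (H c _ h2) _).trans (le_of_eq ?_)
        have e : ENNReal.ofReal (((2 ^ k) ^ (d + 1))⁻¹) * ENNReal.ofReal ((2 ^ (k + 1) * R) ^ d)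
          = ENNReal.ofReal (2 ^ d) * ENNReal.ofReal (R ^ d) * ENNReal.ofReal ((1 / 2) ^ k) := by
          rw [← ENNReal.ofReal_mul (by positivity), ← ENNReal.ofReal_mul (by positivity),
            ← ENNReal.ofReal_mul (by positivity)]
          congr 1
          rw [one_div, inv_pow]
          field_simp
          ring
        calc _ = C * (ENNReal.ofReal (((2 ^ k) ^ (d + 1))⁻¹) *
                ENNReal.ofReal ((2 ^ (k + 1) * R) ^ d)) := by ring
          _ = _ := by rw [e]; ring
    _ = _ := by
        rw [ENNReal.tsum_mul_left, ← ENNReal.ofReal_tsum_of_nonneg (fun k => by positivity)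
          summable_geometric_two, tsum_geometric_two, ENNReal.ofReal_mul (by positivity)]
        ring

open FourierTransform in
lemma aux_case2 {L Lh : PPM (Ed d)} (hFT : IsFT L Lh)
    (hK : ∃ C : ℝ≥0∞, C ≠ ⊤ ∧ ∀ c : Ed d, ∀ R : ℝ, 1 ≤ R →
      ∑' x, ‖L.mass x‖ₑ * ENNReal.ofReal (((1 + ‖R⁻¹ • (x - c)‖) ^ (d + 1))⁻¹)
        ≤ C * ENNReal.ofReal (R ^ d))
    (x : ℕ → Ed d) (R : ℕ → ℝ) (hR : Tendsto R atTop atTop)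
    (h : Tendsto (fun n => Lh.var (ball (x n) (R n)) / ENNReal.ofReal (R n ^ d))
          atTop (𝓝 0)) (a : Ed d) : L.mass a = 0 := by
  obtain ⟨h0, h1, h2, h3, h4, h5, h6, h7⟩ := aux_bump d
  obtain ⟨C, hC, H⟩ := hK
  obtain ⟨D, hD, HD⟩ := aux_decay h0 h1 h2 (d + 1)
  obtain ⟨D1, hD1, HD1⟩ := aux_decay h0 h1 h2 1
  set U : ℕ → ℂ := fun n => ∑' z, L.mass z *
    (((Real.fourierChar (-⟪x n, z - a⟫) : Circle) : ℂ) * 𝓕 h0 (R n • (z - a))) with hU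
  have hUn : ∀ n, 0 < R n → ‖U n‖ₑ ≤ Lh.var (ball (x n) (R n)) / ENNReal.ofReal (R n ^ d) := by
    intro n hn
    have key := aux_key hFT h0 h1 h2 (R n)⁻¹ (by positivity) (x n) a
    have e : ∑' z, L.mass z * (((Real.fourierChar (-⟪x n, z - a⟫) : Circle) : ℂ) *
      (((((R n)⁻¹ ^ d)⁻¹ : ℝ) : ℂ) * 𝓕 h0 ((R n)⁻¹⁻¹ • (z - a)))) = ((R n ^ d : ℝ) : ℂ) * U n := by
      rw [hU, ← tsum_mul_left]
      congr 1
      ext z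
      rw [inv_inv, inv_pow, inv_inv]
      ring
    rw [e] at key
    rw [ENNReal.le_div_iff_mul_le (Or.inl (by simpa using pow_pos hn d))
      (Or.inl ENNReal.ofReal_ne_top)]
    have e2 : ‖((R n ^ d : ℝ) : ℂ) * U n‖ₑ = ‖U n‖ₑ * ENNReal.ofReal (R n ^ d) := by
      rw [enorm_mul, mul_comm, ← ofReal_norm (((R n ^ d : ℝ) : ℂ)), Complex.norm_real,
        Real.norm_of_nonneg (by positivity)]
    rw [← e2, key]
    refine (enorm_tsum_le' _).trans ((aux_bound _ _ (ball (x n) (R n)) 1 ?_ ?_).trans (by simp))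
    · intro y
      rw [norm_mul, Circle.norm_coe, one_mul]
      exact h4 _
    · intro y hy
      have : h0 ((R n)⁻¹ • (y - x n)) ≠ 0 := by
        intro h; apply hy; simp [h]
      have := h3 this
      rw [mem_ball_zero_iff, norm_smul, Real.norm_of_nonneg (by positivity),
        inv_mul_lt_iff₀ hn, mul_one] at this
      rwa [mem_ball, dist_eq_norm]
  have hRpos : ∀ᶠ n in atTop, 1 ≤ R n := hR.eventually_ge_atTop 1
  have lim0 : Tendsto U atTop (𝓝 0) := by
    rw [tendsto_zero_iff_enorm_tendsto_zero]
    refine tendsto_of_tendsto_of_tendsto_of_le_of_le' tendsto_const_nhds h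
      (Eventually.of_forall fun n => zero_le) ?_
    filter_upwards [hRpos] with n hn
    exact hUn n (by linarith)
  have lim1 : Tendsto U atTop (𝓝 (∑' z, if z = a then L.mass a * 𝓕 h0 0 else 0)) := by
    refine tendsto_tsum_of_dominated_convergence
      (bound := fun z => D * (‖L.mass z‖ * ((1 + ‖z - a‖) ^ (d + 1))⁻¹)) ?_ ?_ ?_
    · apply Summable.mul_left
      have := H a 1 le_rfl
      rw [one_pow, ENNReal.ofReal_one, mul_one] at this
      refine (ENNReal.summable_toReal (ne_top_of_le_ne_top hC this)).congr fun z => ?_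
      rw [ENNReal.toReal_mul, toReal_enorm, ENNReal.toReal_ofReal (by positivity), inv_one, one_smul]
    · intro z
      by_cases hz : z = a
      · subst hz
        simp
      · rw [if_neg hz, tendsto_zero_iff_norm_tendsto_zero]
        have hz' : 0 < ‖z - a‖ := norm_pos_iff.2 (sub_ne_zero.2 hz)
        have l : Tendsto (fun n => ‖L.mass z‖ * (D1 / (R n * ‖z - a‖))) atTop (𝓝 (‖L.mass z‖ * 0)) :=
          ((hR.atTop_mul_const hz').const_div_atTop D1).const_mul _
        rw [mul_zero] at l
        refine tendsto_of_tendsto_of_tendsto_of_le_of_le' tendsto_const_nhds l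
          (Eventually.of_forall fun n => norm_nonneg _) ?_
        filter_upwards [hRpos] with n hn
        rw [norm_mul, norm_mul, Circle.norm_coe, one_mul]
        gcongr
        have h0' : 0 < R n * ‖z - a‖ := by positivity
        rw [le_div_iff₀ h0', mul_comm]
        refine le_trans ?_ (HD1 (R n • (z - a)))
        rw [pow_one, norm_smul, Real.norm_of_nonneg (by linarith)]
        gcongr
        linarith
    · filter_upwards [hRpos] with n hn z
      rw [norm_mul, norm_mul, Circle.norm_coe, one_mul]
      have : ‖𝓕 h0 (R n • (z - a))‖ ≤ D * ((1 + ‖z - a‖) ^ (d + 1))⁻¹ := by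
        rw [← div_eq_mul_inv, le_div_iff₀ (by positivity), mul_comm]
        refine le_trans ?_ (HD (R n • (z - a)))
        gcongr
        rw [norm_smul, Real.norm_of_nonneg (by linarith)]
        exact le_mul_of_one_le_left (norm_nonneg _) hn
      calc _ ≤ ‖L.mass z‖ * (D * ((1 + ‖z - a‖) ^ (d + 1))⁻¹) := by gcongr
        _ = _ := by ring
  rw [tsum_ite_eq] at lim1
  have := tendsto_nhds_unique lim1 lim0
  exact (mul_eq_zero.1 this).resolve_right h6

open FourierTransform in
lemma aux_case1 {L Lh : PPM (Ed d)} (hFT : IsFT L Lh) (hlf : Lh.locFinite)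
    (hK : ∃ C : ℝ≥0∞, C ≠ ⊤ ∧ ∀ c : Ed d, ∀ R : ℝ, 1 ≤ R →
      ∑' x, ‖L.mass x‖ₑ * ENNReal.ofReal (((1 + ‖R⁻¹ • (x - c)‖) ^ (d + 1))⁻¹)
        ≤ C * ENNReal.ofReal (R ^ d))
    (x : ℕ → Ed d) (R : ℕ → ℝ) (hR : Tendsto R atTop atTop)
    (h : Tendsto (fun n => L.var (ball (x n) (R n)) / ENNReal.ofReal (R n ^ d))
          atTop (𝓝 0)) (a : Ed d) : Lh.mass a = 0 := by
  obtain ⟨h0, h1, h2, h3, h4, h5, h6, h7⟩ := aux_bump d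
  obtain ⟨C, hC, H⟩ := hK
  obtain ⟨D, hD, HD⟩ := aux_decay h0 h1 h2 (d + 2)
  -- the bound for every ε
  have main : ∀ ε : ℝ, 0 < ε → ‖Lh.mass a‖ₑ ≤ ENNReal.ofReal ε * (ENNReal.ofReal D * C) := by
    intro ε hε
    set V : ℕ → ℂ := fun n => ∑' y, Lh.mass y *
      (((Real.fourierChar (⟪x n, y - a⟫) : Circle) : ℂ) * h0 ((ε * R n) • (y - a))) with hV
    have hRε : Tendsto (fun n => ε * R n) atTop atTop := hR.const_mul_atTop hε
    have hRpos : ∀ᶠ n in atTop, 1 ≤ R n := hR.eventually_ge_atTop 1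
    have hRpos' : ∀ᶠ n in atTop, 1 ≤ ε * R n := hRε.eventually_ge_atTop 1
    have lim1 : Tendsto V atTop (𝓝 (∑' z, if z = a then Lh.mass a else 0)) := by
      refine tendsto_tsum_of_dominated_convergence
        (bound := fun z => (ball a 1).indicator (fun z => ‖Lh.mass z‖) z) ?_ ?_ ?_
      · have hfin : ∑' z, (ball a 1).indicator (fun z => ‖Lh.mass z‖ₑ) z ≠ ⊤ := by
          refine ne_top_of_le_ne_top (hlf (‖a‖ + 1)).ne ?_
          rw [var_eq]
          refine ENNReal.tsum_le_tsum fun z => ?_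
          refine Set.indicator_le_indicator_of_subset ?_ (fun _ => zero_le) z
          exact ball_subset_ball' (by rw [dist_zero_right]; linarith)
        refine (ENNReal.summable_toReal hfin).congr fun z => ?_
        by_cases hz : z ∈ ball a 1
        · rw [Set.indicator_of_mem hz, Set.indicator_of_mem hz, toReal_enorm]
        · rw [Set.indicator_of_notMem hz, Set.indicator_of_notMem hz, ENNReal.toReal_zero]
      · intro z
        by_cases hz : z = a
        · subst hz
          simp [h5]
        · rw [if_neg hz]
          have hz' : 0 < ‖z - a‖ := norm_pos_iff.2 (sub_ne_zero.2 hz)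
          refine tendsto_const_nhds.congr' ?_
          filter_upwards [hRpos', (hRε.atTop_mul_const hz').eventually_ge_atTop 1] with n hn' hn
          have : h0 ((ε * R n) • (z - a)) = 0 := by
            by_contra hne
            have := h3 hne
            rw [mem_ball_zero_iff, norm_smul, Real.norm_of_nonneg (by linarith)] at this
            linarith
          rw [this]; simp
      · filter_upwards [hRpos'] with n hn z
        rw [norm_mul, norm_mul, Circle.norm_coe, one_mul]
        by_cases hz : z ∈ ball a 1
        · rw [Set.indicator_of_mem hz]
          exact mul_le_of_le_one_right (norm_nonneg _) (h4 _)
        · have : h0 ((ε * R n) • (z - a)) = 0 := by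
            by_contra hne
            have := h3 hne
            rw [mem_ball_zero_iff, norm_smul, Real.norm_of_nonneg (by linarith)] at this
            rw [mem_ball, dist_eq_norm] at hz
            nlinarith
          rw [this, Set.indicator_of_notMem hz]; simp
    rw [tsum_ite_eq] at lim1
    have hVn : ∀ n, 0 < R n → 1 ≤ ε * R n → ‖V n‖ₑ ≤
        ENNReal.ofReal (D * (ε ^ d)⁻¹) * (L.var (ball (x n) (R n)) / ENNReal.ofReal (R n ^ d)) +
          ENNReal.ofReal ε * (ENNReal.ofReal D * C) := by
      intro n hn hn1
      set r := ε * R n with hr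
      have hr0 : 0 < r := by linarith
      have key := aux_key hFT h0 h1 h2 r hr0 a (x n)
      have e : ∑' y, Lh.mass y * (((Real.fourierChar (⟪x n, y⟫) : Circle) : ℂ) * h0 (r • (y - a)))
          = ((Real.fourierChar (⟪x n, a⟫) : Circle) : ℂ) * V n := by
        rw [hV, ← tsum_mul_left]
        congr 1
        ext z
        have : ⟪x n, z⟫ = ⟪x n, a⟫ + ⟪x n, z - a⟫ := by rw [inner_sub_right]; ring
        rw [this, AddChar.map_add_eq_mul, Circle.coe_mul]
        ring
      have e2 : ‖V n‖ₑ = ‖((Real.fourierChar (⟪x n, a⟫) : Circle) : ℂ) * V n‖ₑ := by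
        rw [← ofReal_norm, ← ofReal_norm, norm_mul, Circle.norm_coe, one_mul]
      rw [e2, ← e, ← key]
      refine (enorm_tsum_le' _).trans ?_
      have hpt : ∀ z, ‖L.mass z * (((Real.fourierChar (-⟪a, z - x n⟫) : Circle) : ℂ) *
          ((((r ^ d)⁻¹ : ℝ) : ℂ) * 𝓕 h0 (r⁻¹ • (z - x n))))‖ₑ ≤
          ENNReal.ofReal ((r ^ d)⁻¹ * D) * (ball (x n) (R n)).indicator (fun z => ‖L.mass z‖ₑ) z +
          ENNReal.ofReal ((r ^ d)⁻¹ * D * ε) *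
            (‖L.mass z‖ₑ * ENNReal.ofReal (((1 + ‖r⁻¹ • (z - x n)‖) ^ (d + 1))⁻¹)) := by
        intro z
        have hn' : ‖(((Real.fourierChar (-⟪a, z - x n⟫) : Circle) : ℂ) *
          ((((r ^ d)⁻¹ : ℝ) : ℂ) * 𝓕 h0 (r⁻¹ • (z - x n))))‖ =
            (r ^ d)⁻¹ * ‖𝓕 h0 (r⁻¹ • (z - x n))‖ := by
          rw [norm_mul, norm_mul, Circle.norm_coe, one_mul, Complex.norm_real,
            Real.norm_of_nonneg (by positivity)]
        rw [enorm_mul, ← ofReal_norm (_ * _), hn']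
        have hd := HD (r⁻¹ • (z - x n))
        by_cases hz : z ∈ ball (x n) (R n)
        · rw [Set.indicator_of_mem hz]
          refine le_add_of_le_of_nonneg ?_ zero_le
          rw [mul_comm]
          gcongr
          refine le_trans ?_ hd
          exact le_mul_of_one_le_left (norm_nonneg _) (one_le_pow₀ (by simp))
        · rw [Set.indicator_of_notMem hz, mul_zero, zero_add, mul_left_comm,
            ← ENNReal.ofReal_mul (by positivity)]
          refine mul_le_mul' le_rfl (ENNReal.ofReal_le_ofReal ?_)
          rw [mul_assoc, mul_assoc]
          refine mul_le_mul_of_nonneg_left ?_ (by positivity)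
          have hw : 1 ≤ ε * (1 + ‖r⁻¹ • (z - x n)‖) := by
            rw [mem_ball, not_lt, dist_eq_norm] at hz
            rw [norm_smul, Real.norm_of_nonneg (by positivity)]
            have : 1 ≤ ε * (r⁻¹ * ‖z - x n‖) := by
              rw [hr]
              have : ε * ((ε * R n)⁻¹ * ‖z - x n‖) = ‖z - x n‖ / R n := by field_simp
              rw [this, one_le_div hn]
              exact hz
            nlinarith
          set w := 1 + ‖r⁻¹ • (z - x n)‖ with hwdef
          have hw0 : 0 < w := by positivity
          rw [← mul_assoc, ← div_eq_mul_inv, le_div_iff₀ (by positivity)]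
          calc ‖𝓕 h0 (r⁻¹ • (z - x n))‖ * w ^ (d + 1)
              ≤ ‖𝓕 h0 (r⁻¹ • (z - x n))‖ * w ^ (d + 1) * (ε * w) :=
                le_mul_of_one_le_right (by positivity) hw
            _ = (w ^ (d + 2) * ‖𝓕 h0 (r⁻¹ • (z - x n))‖) * ε := by ring
            _ ≤ D * ε := by gcongr
      refine (ENNReal.tsum_le_tsum hpt).trans ?_
      rw [ENNReal.tsum_add, ENNReal.tsum_mul_left, ENNReal.tsum_mul_left, ← var_eq]
      refine add_le_add (le_of_eq ?_) ?_
      · rw [div_eq_mul_inv, ← ENNReal.ofReal_inv_of_pos (by positivity), mul_left_comm,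
          ← ENNReal.ofReal_mul (by positivity), mul_comm]
        congr 2
        rw [hr, mul_pow, mul_inv]; ring
      · refine (mul_le_mul_right (H (x n) r hn1) _).trans (le_of_eq ?_)
        rw [mul_comm C, ← mul_assoc, ← mul_assoc, ← ENNReal.ofReal_mul (by positivity),
          ← ENNReal.ofReal_mul (by positivity)]
        congr 2
        field_simp
    have lim2 := ((ENNReal.Tendsto.const_mul h
      (Or.inr (ENNReal.ofReal_ne_top (r := D * (ε ^ d)⁻¹)))).add_const
        (ENNReal.ofReal ε * (ENNReal.ofReal D * C)))
    rw [mul_zero, zero_add] at lim2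
    refine le_of_tendsto_of_tendsto lim1.enorm lim2 ?_
    filter_upwards [hRpos, hRpos'] with n h1 h2
    exact hVn n (by linarith) h2
  have hfin : ENNReal.ofReal D * C ≠ ⊤ := ENNReal.mul_ne_top ENNReal.ofReal_ne_top hC
  have lim : Tendsto (fun n : ℕ => ENNReal.ofReal (1 / ((n : ℝ) + 1)) * (ENNReal.ofReal D * C))
      atTop (𝓝 (ENNReal.ofReal 0 * (ENNReal.ofReal D * C))) :=
    ENNReal.Tendsto.mul_const (ENNReal.tendsto_ofReal tendsto_one_div_add_atTop_nhds_zero_nat)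
      (Or.inr hfin)
  rw [ENNReal.ofReal_zero, zero_mul] at lim
  have := ge_of_tendsto lim (Eventually.of_forall fun n : ℕ => main (1 / ((n : ℝ) + 1)) (by positivity))
  exact enorm_eq_zero.1 (le_antisymm this zero_le)

/-- The difference of two pure point measures. -/
def PPM.diff (μ ν : PPM (Ed d)) : PPM (Ed d) where
  mass x := μ.mass x - ν.mass x
  countable := (μ.countable.union ν.countable).mono (Function.support_sub _ _)

lemma diff_var_le (μ ν : PPM (Ed d)) (A : Set (Ed d)) :
    (μ.diff ν).var A ≤ μ.var A + ν.var A := by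
  unfold PPM.var
  rw [← ENNReal.tsum_add]
  exact ENNReal.tsum_le_tsum fun z => enorm_sub_le

lemma lf_summable {L : PPM (Ed d)} (hL : L.locFinite) (φ : SchwartzMap (Ed d) ℂ)
    (hφ : HasCompactSupport φ) : Summable fun x => L.mass x * φ x := by
  obtain ⟨M, hM⟩ := φ.continuous.bounded_above_of_compact_support hφ
  obtain ⟨ρ, hρ⟩ := hφ.isCompact.isBounded.subset_ball 0
  have := aux_bound L φ (ball 0 ρ) M hM ((subset_tsupport _).trans hρ)
  have h2 := ENNReal.summable_toReal (ne_top_of_le_ne_top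
    (ENNReal.mul_ne_top ENNReal.ofReal_ne_top (hL ρ).ne) this)
  simp_rw [toReal_enorm] at h2
  exact h2.of_norm

/-- Uniqueness theorem: if `μ, ν` are non-negative Poisson measures on `ℝ^d`
with Fourier transforms `μh, νh`, and on some sequence of balls `B(x_n, R_n)` with
`R_n → ∞` either `|μ-ν|(B(x_n,R_n)) = o(R_n^d)` or `|μ̂-ν̂|(B(x_n,R_n)) = o(R_n^d)`,
then `μ = ν`. -/
theorem statement2 {d : ℕ} (μ ν μh νh : PPM (Ed d))
    (hμpos : μ.Nonneg) (hνpos : ν.Nonneg)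
    (hμlf : μ.locFinite) (hνlf : ν.locFinite)
    (hμt : μ.temperate) (hνt : ν.temperate)
    (hμhlf : μh.locFinite) (hνhlf : νh.locFinite)
    (hFμ : IsFT μ μh) (hFν : IsFT ν νh)
    (x : ℕ → Ed d) (R : ℕ → ℝ) (hR : Tendsto R atTop atTop)
    (h : Tendsto (fun n => dvar μ ν (ball (x n) (R n)) / ENNReal.ofReal (R n ^ d))
          atTop (𝓝 0) ∨
         Tendsto (fun n => dvar μh νh (ball (x n) (R n)) / ENNReal.ofReal (R n ^ d))
          atTop (𝓝 0)) :
    μ.mass = ν.mass := by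
  obtain ⟨C1, hC1, H1⟩ := aux_growth hμpos hμt hμhlf hFμ
  obtain ⟨C2, hC2, H2⟩ := aux_growth hνpos hνt hνhlf hFν
  have hK := aux_K (L := μ.diff ν) ⟨C1 + C2, ENNReal.add_ne_top.2 ⟨hC1, hC2⟩, fun c R hR => by
    rw [add_mul]
    exact (diff_var_le μ ν _).trans (add_le_add (H1 c R hR) (H2 c R hR))⟩
  have hFT : IsFT (μ.diff ν) (μh.diff νh) := by
    intro φ hφ
    have e1 := hFμ φ hφ
    have e2 := hFν φ hφ
    simp only [PPM.pair, PPM.diff, sub_mul] at e1 e2 ⊢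
    rw [(hμt _).tsum_sub (hνt _), (lf_summable hμhlf φ hφ).tsum_sub (lf_summable hνhlf φ hφ),
      e1, e2]
  have hlf : (μh.diff νh).locFinite := fun r =>
    (diff_var_le _ _ _).trans_lt (ENNReal.add_lt_top.2 ⟨hμhlf r, hνhlf r⟩)
  have fin : Tendsto (fun n => (μh.diff νh).var (ball (x n) (R n)) / ENNReal.ofReal (R n ^ d))
      atTop (𝓝 0) := by
    rcases h with h | h
    · have hz := aux_case1 hFT hlf hK x R hR h
      have : ∀ A, (μh.diff νh).var A = 0 := fun A => by
        unfold PPM.var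
        simp [hz]
      simp [this]
    · exact h
  funext a
  exact sub_eq_zero.1 (aux_case2 hFT hK x R hR fin a)

end
end

section
/- Let μ be a non-negative Poisson measure on ℝ^d, and let B(x_n, R_n) ⊂ ℝ^d be a sequence of balls with R_n → ∞ as n → ∞. If either μ(B(x_n,R_n)) = o(R_n^d) as n → ∞, or |μ̂|(B(x_n,R_n)) = o(R_n^d) as n → ∞, then μ = 0. -/
open MeasureTheory Metric Filter Topology Complex SchwartzMap Bornology
open scoped RealInnerProductSpace ENNReal

noncomputable section

variable {d : ℕ}

open scoped FourierTransform ContDiff Convolution LineDeriv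

/-- The phase `e^{2πit}`. -/
def ph (t : ℝ) : ℂ := Complex.exp (((2 * Real.pi * t : ℝ) : ℂ) * I)

lemma ph_norm (t : ℝ) : ‖ph t‖ = 1 := Complex.norm_exp_ofReal_mul_I _

lemma ph_add (s t : ℝ) : ph (s + t) = ph s * ph t := by
  unfold ph; rw [← Complex.exp_add]; congr 1; push_cast; ring

lemma ph_zero : ph 0 = 1 := by simp [ph]

lemma fourier_ph (g : Ed d → ℂ) (x : Ed d) : 𝓕 g x = ∫ v, ph (-(inner ℝ v x)) * g v := by
  rw [Real.fourier_eq]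
  refine integral_congr_ae (ae_of_all _ fun v => ?_)
  simp only [Circle.smul_def, Real.fourierChar_apply, smul_eq_mul, ph]

/-- modulated and dilated function -/
def md (g : Ed d → ℂ) (s : ℝ) (c γ₀ : Ed d) (γ : Ed d) : ℂ :=
  ph (inner ℝ γ c) * g (s • (γ - γ₀))

lemma fourier_md (g : Ed d → ℂ) {s : ℝ} (hs : 0 < s) (c γ₀ x : Ed d) :
    𝓕 (md g s c γ₀) x
      = ph (-(inner ℝ γ₀ (x - c))) * (((s ^ d)⁻¹ : ℝ) : ℂ) * 𝓕 g (s⁻¹ • (x - c)) := by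
  rw [fourier_ph, fourier_ph]
  have h1 : ∀ v : Ed d, ph (-(inner ℝ v x)) * md g s c γ₀ v =
      (fun u : Ed d => ph (-(inner ℝ γ₀ (x - c))) *
        (ph (-(inner ℝ u (s⁻¹ • (x - c)))) * g u)) (s • (v - γ₀)) := by
    intro v
    simp only [md, ← mul_assoc, ← ph_add]
    congr 2
    simp only [inner_smul_left, inner_smul_right, inner_sub_left, inner_sub_right]
    simp
    field_simp
    ring
  simp_rw [h1]
  rw [integral_sub_right_eq_self (μ := volume) (fun v : Ed d => (fun u : Ed d =>
      ph (-(inner ℝ γ₀ (x - c))) * (ph (-(inner ℝ u (s⁻¹ • (x - c)))) * g u)) (s • v)) γ₀]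
  have h2 := Measure.integral_comp_smul_of_nonneg (volume : Measure (Ed d)) (fun u : Ed d =>
      ph (-(inner ℝ γ₀ (x - c))) * (ph (-(inner ℝ u (s⁻¹ • (x - c)))) * g u)) s (hR := hs.le)
  refine h2.trans ?_
  rw [integral_const_mul]
  simp
  ring

lemma md_contDiff {g : Ed d → ℂ} (hg : ContDiff ℝ ∞ g) (s : ℝ) (c γ₀ : Ed d) :
    ContDiff ℝ ∞ (md g s c γ₀) := by
  unfold md ph
  have h1 : ContDiff ℝ ∞ (fun γ : Ed d => ((2 * Real.pi * inner ℝ γ c : ℝ) : ℂ)) :=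
    Complex.ofRealCLM.contDiff.comp (contDiff_const.mul (contDiff_id.inner ℝ contDiff_const))
  refine ContDiff.mul ?_ ?_
  · exact (h1.mul contDiff_const).cexp
  · exact hg.comp (by fun_prop)

lemma md_support {g : Ed d → ℂ} (hg : HasCompactSupport g) {s : ℝ} (hs : 0 < s) (c γ₀ : Ed d) :
    HasCompactSupport (md g s c γ₀) := by
  unfold md
  refine HasCompactSupport.mul_left ?_
  have := hg.comp_homeomorph ((Homeomorph.subRight γ₀).trans (Homeomorph.smulOfNeZero s hs.ne'))
  exact this

lemma ft_pair (μ μh : PPM (Ed d)) (hμt : μ.temperate) (hFμ : IsFT μ μh) {g : Ed d → ℂ}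
    (hg : ContDiff ℝ ∞ g) (hc : HasCompactSupport g) :
    Summable (fun x => μ.mass x * 𝓕 g x) ∧
      ∑' x, μ.mass x * 𝓕 g x = ∑' γ, μh.mass γ * g γ := by
  have h1 := hFμ (hc.toSchwartzMap hg) hc
  have h2 := hμt (FourierTransform.fourierCLE ℂ (SchwartzMap (Ed d) ℂ) (hc.toSchwartzMap hg))
  simp only [FourierTransform.fourierCLE_apply, SchwartzMap.fourier_coe] at h1 h2
  exact ⟨h2, h1⟩

lemma ft_md (μ μh : PPM (Ed d)) (hμt : μ.temperate) (hFμ : IsFT μ μh) {g : Ed d → ℂ}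
    (hg : ContDiff ℝ ∞ g) (hc : HasCompactSupport g) {s : ℝ} (hs : 0 < s) (c γ₀ : Ed d) :
    Summable (fun x => μ.mass x * (ph (-(inner ℝ γ₀ (x - c))) * (((s ^ d)⁻¹ : ℝ) : ℂ) *
        𝓕 g (s⁻¹ • (x - c)))) ∧
      ∑' x, μ.mass x * (ph (-(inner ℝ γ₀ (x - c))) * (((s ^ d)⁻¹ : ℝ) : ℂ) *
        𝓕 g (s⁻¹ • (x - c))) = ∑' γ, μh.mass γ * md g s c γ₀ γ := by
  have := ft_pair μ μh hμt hFμ (md_contDiff hg s c γ₀) (md_support hc hs c γ₀)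
  simpa only [fourier_md g hs] using this

/-- local finiteness gives summability on balls -/
lemma summable_ball (μ : PPM (Ed d)) (h : μ.locFinite) (r : ℝ) :
    Summable ((ball (0 : Ed d) r).indicator fun x => ‖μ.mass x‖) := by
  rw [← summable_subtype_iff_indicator]
  have := (h r).ne
  unfold PPM.var at this
  rw [ENNReal.tsum_coe_ne_top_iff_summable] at this
  exact NNReal.summable_coe.mpr this

lemma supp_ball {g : Ed d → ℂ} (hc : HasCompactSupport g) :
    ∃ r : ℝ, 0 < r ∧ ∀ u, g u ≠ 0 → ‖u‖ < r := by
  obtain ⟨r, hr⟩ := hc.isBounded.subset_ball 0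
  refine ⟨max r 1, by positivity, fun u hu => ?_⟩
  have := hr (subset_tsupport g hu)
  simp at this
  exact lt_max_of_lt_left this

lemma bdd_of_supp {g : Ed d → ℂ} (hg : Continuous g) (hc : HasCompactSupport g) :
    ∃ C : ℝ, 0 ≤ C ∧ ∀ u, ‖g u‖ ≤ C := by
  obtain ⟨C, hC⟩ := hc.exists_bound_of_continuous hg
  exact ⟨C, (norm_nonneg _).trans (hC 0), hC⟩

/-- The key limit. -/
lemma lim_md (μh : PPM (Ed d)) (hlf : μh.locFinite) {g : Ed d → ℂ}
    (hg : Continuous g) (hc : HasCompactSupport g) (s : ℕ → ℝ) (hs : Tendsto s atTop atTop)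
    (c : ℕ → Ed d) (γ₀ : Ed d) :
    Tendsto (fun n => ‖∑' γ, μh.mass γ * md g (s n) (c n) γ₀ γ‖) atTop
      (𝓝 (‖μh.mass γ₀‖ * ‖g 0‖)) := by
  classical
  obtain ⟨r, hr, hsupp⟩ := supp_ball hc
  obtain ⟨C, hC0, hC⟩ := bdd_of_supp hg hc
  have key : Tendsto (fun n => ∑' γ, μh.mass γ * (ph (inner ℝ (γ - γ₀) (c n)) *
      g (s n • (γ - γ₀)))) atTop
      (𝓝 (∑' γ, if γ = γ₀ then μh.mass γ₀ * g 0 else 0)) := by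
    refine tendsto_tsum_of_dominated_convergence
      (bound := fun γ => C * (ball (0 : Ed d) (r + ‖γ₀‖)).indicator (fun x => ‖μh.mass x‖) γ)
      ((summable_ball μh hlf _).mul_left C) ?_ ?_
    · intro γ
      split_ifs with h
      · subst h
        simp [ph_zero]
      · have hpos : 0 < ‖γ - γ₀‖ := norm_pos_iff.mpr (sub_ne_zero.mpr h)
        refine tendsto_const_nhds.congr' ?_
        filter_upwards [hs.eventually_ge_atTop (r / ‖γ - γ₀‖), hs.eventually_ge_atTop 0]
          with n hn hn0
        have : g (s n • (γ - γ₀)) = 0 := by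
          by_contra hne
          have h1 := hsupp _ hne
          rw [norm_smul, Real.norm_of_nonneg hn0] at h1
          rw [div_le_iff₀ hpos] at hn
          linarith
        simp [this]
    · filter_upwards [hs.eventually_ge_atTop 1] with n hn γ
      by_cases hγ : γ ∈ ball (0 : Ed d) (r + ‖γ₀‖)
      · rw [Set.indicator_of_mem hγ, norm_mul, norm_mul, ph_norm, one_mul, mul_comm]
        gcongr
        exact hC _
      · have : g (s n • (γ - γ₀)) = 0 := by
          by_contra hne
          have h1 := hsupp _ hne
          rw [norm_smul, Real.norm_of_nonneg (by linarith)] at h1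
          apply hγ
          rw [mem_ball_zero_iff]
          have h2 := norm_sub_norm_le γ γ₀
          nlinarith [norm_nonneg (γ - γ₀)]
        simp [this, hγ]
  rw [tsum_ite_eq] at key
  have := key.norm
  rw [norm_mul] at this
  refine this.congr fun n => ?_
  have h1 : ∀ γ, μh.mass γ * md g (s n) (c n) γ₀ γ = ph (inner ℝ γ₀ (c n)) *
      (μh.mass γ * (ph (inner ℝ (γ - γ₀) (c n)) * g (s n • (γ - γ₀)))) := by
    intro γ
    have : inner ℝ γ (c n) = inner ℝ γ₀ (c n) + inner ℝ (γ - γ₀) (c n) := by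
      rw [inner_sub_left]; ring
    rw [md, this, ph_add]; ring
  simp_rw [h1]
  rw [tsum_mul_left, norm_mul, ph_norm, one_mul]

lemma exists_test (d : ℕ) : ∃ (g h : Ed d → ℂ) (ψ : Ed d → ℝ),
    ContDiff ℝ ∞ g ∧ HasCompactSupport g ∧ ContDiff ℝ ∞ h ∧ HasCompactSupport h ∧
    (∀ x, 𝓕 g x = (ψ x : ℂ)) ∧ (∀ x, 0 ≤ ψ x) ∧ 0 < ψ 0 ∧ g 0 ≠ 0 ∧
    (∀ x, 𝓕 h x = ((‖x‖ ^ 2 * ψ x : ℝ) : ℂ)) ∧ Continuous ψ ∧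
    ∃ C : ℝ, 0 ≤ C ∧ ∀ u, (1 + ‖u‖) ^ (d + 1) * ψ u ≤ C := by
  let b : ContDiffBump (0 : Ed d) := ⟨1, 2, one_pos, one_lt_two⟩
  let η : Ed d → ℂ := fun x => ((b x : ℝ) : ℂ)
  have hηs : ContDiff ℝ ∞ η := Complex.ofRealCLM.contDiff.comp b.contDiff
  have hηc : HasCompactSupport η := b.hasCompactSupport.comp_left (g := fun t : ℝ => (t : ℂ)) rfl
  have hηi : Integrable η := hηs.continuous.integrable_of_hasCompactSupport hηc
  have hηe : ∀ x, η (-x) = η x := fun x => by simp [η, b.neg]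
  let g : Ed d → ℂ := η ⋆[ContinuousLinearMap.mul ℂ ℂ] η
  have hgc : HasCompactSupport g := hηc.convolution _ hηc
  have hgs : ContDiff ℝ ∞ g :=
    hηc.contDiff_convolution_right (ContinuousLinearMap.mul ℝ ℂ) hηi.locallyIntegrable hηs
  have hF : ∀ x, 𝓕 g x = 𝓕 η x * 𝓕 η x := fun x => Real.fourier_mul_convolution_eq hηi hηi x
  have hreal : ∀ x, (starRingEnd ℂ) (𝓕 η x) = 𝓕 η x := by
    intro x
    rw [fourier_ph, ← integral_conj, ← integral_neg_eq_self]
    congr 1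
    ext v
    simp only [map_mul, η, b.neg, Complex.conj_ofReal, ph, inner_neg_left]
    congr 1
    rw [← Complex.exp_conj]
    simp [Complex.conj_ofNat]
  let ψ : Ed d → ℝ := fun x => (𝓕 η x).re ^ 2
  have hre : ∀ x, 𝓕 η x = ((𝓕 η x).re : ℂ) := fun x => (Complex.conj_eq_iff_re.mp (hreal x)).symm
  have hψ : ∀ x, 𝓕 g x = (ψ x : ℂ) := by
    intro x
    rw [hF, hre x]; simp [ψ, sq]
  let φ : SchwartzMap (Ed d) ℂ := hgc.toSchwartzMap hgs
  have hφ : ∀ x, 𝓕 φ x = (ψ x : ℂ) := by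
    intro x; rw [SchwartzMap.fourier_coe]; exact hψ x
  let θ : SchwartzMap (Ed d) ℂ :=
    (-(1 / (4 * Real.pi ^ 2) : ℂ)) • ∑ i : Fin d, ∂_{EuclideanSpace.single i (1 : ℝ)}
      (∂_{EuclideanSpace.single i (1 : ℝ)} φ)
  have hθc : HasCompactSupport θ := by
    have h1 : ∀ i : Fin d, HasCompactSupport (∂_{EuclideanSpace.single i (1 : ℝ)}
      (∂_{EuclideanSpace.single i (1 : ℝ)} φ) : SchwartzMap (Ed d) ℂ) := fun i =>
      (IsCompact.of_isClosed_subset hgc (isClosed_tsupport _)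
        ((SchwartzMap.tsupport_lineDerivOp_subset _ _).trans
          (SchwartzMap.tsupport_lineDerivOp_subset _ _)))
    refine HasCompactSupport.intro (isCompact_iUnion fun i => h1 i) (fun x hx => ?_)
    simp only [Set.mem_iUnion, not_exists] at hx
    simp only [θ, _root_.smul_apply, _root_.sum_apply]
    rw [Finset.sum_eq_zero fun i _ => image_eq_zero_of_notMem_tsupport (hx i), smul_zero]
  have hθF : ∀ x, 𝓕 θ x = ((‖x‖ ^ 2 * ψ x : ℝ) : ℂ) := by
    intro x
    have htg : ∀ m : Ed d, (inner ℝ · m).HasTemperateGrowth := fun m => by fun_prop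
    have : 𝓕 θ = (-(1 / (4 * Real.pi ^ 2) : ℂ)) • ∑ i : Fin d,
        𝓕 (∂_{EuclideanSpace.single i (1 : ℝ)}
      (∂_{EuclideanSpace.single i (1 : ℝ)} φ)) := by
      simp only [θ, ← FourierTransform.fourierCLM_apply (R := ℂ), map_smul, map_sum]
    rw [this]
    simp only [_root_.smul_apply, _root_.sum_apply, SchwartzMap.fourier_lineDerivOp_eq,
      SchwartzMap.smulLeftCLM_apply_apply (htg _), hφ, EuclideanSpace.norm_sq_eq]
    simp only [smul_eq_mul, EuclideanSpace.inner_single_right, Finset.mul_sum, Finset.sum_mul]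
    push_cast
    refine Finset.sum_congr rfl fun i _ => ?_
    have hpi : (Real.pi : ℂ) ≠ 0 := by exact_mod_cast Real.pi_ne_zero
    simp
    field_simp
    rw [← Complex.ofReal_pow, ← Complex.ofReal_pow, sq_abs]
    ring_nf
    simp
  have hpos : 0 < ∫ x, b x := by
    exact b.integral_pos
  refine ⟨g, θ, ψ, hgs, hgc, θ.smooth ⊤, hθc, hψ, fun x => sq_nonneg _, ?_, ?_, ?_, ?_, ?_⟩
  · have : 𝓕 η 0 = ((∫ x, b x : ℝ) : ℂ) := by
      rw [fourier_ph]; simp [ph_zero, η, integral_complex_ofReal]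
    simp only [ψ, this, Complex.ofReal_re]
    positivity
  · have : g 0 = ((∫ x, b x ^ 2 : ℝ) : ℂ) := by
      simp only [g, convolution_def, ← integral_complex_ofReal]
      refine integral_congr_ae (ae_of_all _ fun t => ?_)
      simp [η, b.neg, sq]
    rw [this]
    norm_cast
    refine ne_of_gt ?_
    refine Continuous.integral_pos_of_hasCompactSupport_nonneg_nonzero (x := 0)
      (b.continuous.pow 2) ?_ (fun x => sq_nonneg _) ?_
    · exact b.hasCompactSupport.comp_left (g := fun t : ℝ => t ^ 2) (by simp)
    · have : b 0 = 1 := b.one_of_mem_closedBall (by simp [b])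
      simp [this]
  · intro x
    rw [← SchwartzMap.fourier_coe]; exact hθF x
  · have : ψ = fun x => (𝓕 φ x).re := by ext x; rw [hφ]; simp
    rw [this]
    exact Complex.continuous_re.comp (𝓕 φ).continuous
  · have hb : ∃ C : ℝ, ∀ u, (1 + ‖u‖) ^ (d + 1) * ψ u ≤ C := by
      have h1 := fun u => SchwartzMap.one_add_le_sup_seminorm_apply (𝕜 := ℂ) (m := (d + 1, 0))
        (k := d + 1) (n := 0) le_rfl le_rfl (𝓕 φ) u
      simp only [norm_iteratedFDeriv_zero, hφ, Complex.norm_real] at h1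
      exact ⟨_, fun u => (mul_le_mul_of_nonneg_left (Real.le_norm_self _)
        (by positivity)).trans (h1 u)⟩
    obtain ⟨C, hC⟩ := hb
    exact ⟨C, le_trans (mul_nonneg (by positivity) (sq_nonneg _)) (hC 0), hC⟩

lemma pos_sum (μ μh : PPM (Ed d)) (hμpos : μ.Nonneg) (hμt : μ.temperate) (hFμ : IsFT μ μh)
    {g : Ed d → ℂ} (hg : ContDiff ℝ ∞ g) (hc : HasCompactSupport g) {ψ : Ed d → ℝ}
    (hψ : ∀ x, 𝓕 g x = (ψ x : ℂ)) (hψ0 : ∀ x, 0 ≤ ψ x) {s : ℝ} (hs : 0 < s) (c : Ed d) :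
    Summable (fun x => ‖μ.mass x‖ * ((s ^ d)⁻¹ * ψ (s⁻¹ • (x - c)))) ∧
    ∑' x, ‖μ.mass x‖ * ((s ^ d)⁻¹ * ψ (s⁻¹ • (x - c))) = ‖∑' γ, μh.mass γ * md g s c 0 γ‖ := by
  obtain ⟨h1, h2⟩ := ft_md μ μh hμt hFμ hg hc hs c 0
  have h3 : ∀ x, μ.mass x * (ph (-(inner ℝ (0 : Ed d) (x - c))) * (((s ^ d)⁻¹ : ℝ) : ℂ) *
        𝓕 g (s⁻¹ • (x - c))) =
        ((‖μ.mass x‖ * ((s ^ d)⁻¹ * ψ (s⁻¹ • (x - c))) : ℝ) : ℂ) := by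
    intro x
    rw [hψ, inner_zero_left, neg_zero, ph_zero]
    nth_rw 1 [hμpos x]
    push_cast; ring
  simp_rw [h3] at h1 h2
  refine ⟨Complex.summable_ofReal.mp h1, ?_⟩
  rw [← h2, ← Complex.ofReal_tsum, Complex.norm_real, Real.norm_of_nonneg]
  exact tsum_nonneg fun x => mul_nonneg (norm_nonneg _) (mul_nonneg (by positivity) (hψ0 _))

lemma mod_le (μ μh : PPM (Ed d)) (hμpos : μ.Nonneg) (hμt : μ.temperate) (hFμ : IsFT μ μh)
    {g : Ed d → ℂ} (hg : ContDiff ℝ ∞ g) (hc : HasCompactSupport g) {ψ : Ed d → ℝ}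
    (hψ : ∀ x, 𝓕 g x = (ψ x : ℂ)) (hψ0 : ∀ x, 0 ≤ ψ x) {s : ℝ} (hs : 0 < s) (c γ₀ : Ed d) :
    ‖∑' γ, μh.mass γ * md g s c γ₀ γ‖ ≤ ‖∑' γ, μh.mass γ * md g s c 0 γ‖ := by
  obtain ⟨h1, h2⟩ := pos_sum μ μh hμpos hμt hFμ hg hc hψ hψ0 hs c
  rw [← h2, ← (ft_md μ μh hμt hFμ hg hc hs c γ₀).2]
  refine tsum_of_norm_bounded h1.hasSum fun x => le_of_eq ?_
  rw [norm_mul, norm_mul, norm_mul, ph_norm, one_mul, hψ, Complex.norm_real, Complex.norm_real,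
    Real.norm_of_nonneg (hψ0 _), Real.norm_of_nonneg (by positivity)]

lemma mass_le_zero (μ μh : PPM (Ed d)) (hμpos : μ.Nonneg) (hμt : μ.temperate)
    (hlf : μh.locFinite) (hFμ : IsFT μ μh)
    {g : Ed d → ℂ} (hg : ContDiff ℝ ∞ g) (hc : HasCompactSupport g) {ψ : Ed d → ℝ}
    (hψ : ∀ x, 𝓕 g x = (ψ x : ℂ)) (hψ0 : ∀ x, 0 ≤ ψ x) (hg0 : g 0 ≠ 0) (γ₀ : Ed d) :
    ‖μh.mass γ₀‖ ≤ ‖μh.mass 0‖ := by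
  have hs : Tendsto (fun n : ℕ => (n : ℝ) + 1) atTop atTop :=
    tendsto_atTop_add_const_right _ _ tendsto_natCast_atTop_atTop
  have h1 := lim_md μh hlf hg.continuous hc _ hs (fun _ => 0) γ₀
  have h2 := lim_md μh hlf hg.continuous hc _ hs (fun _ => 0) 0
  have h3 := le_of_tendsto_of_tendsto' h1 h2 fun n =>
    mod_le μ μh hμpos hμt hFμ hg hc hψ hψ0 (by positivity) 0 γ₀
  exact le_of_mul_le_mul_right h3 (norm_pos_iff.mpr hg0)

lemma hasSum_var (μ : PPM (Ed d)) {A : Set (Ed d)} (hA : μ.var A ≠ ⊤) :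
    HasSum (A.indicator fun x => ‖μ.mass x‖) (μ.var A).toReal := by
  rw [← hasSum_subtype_iff_indicator]
  unfold PPM.var at *
  have h := ENNReal.tsum_coe_ne_top_iff_summable.mp hA
  rw [← ENNReal.coe_tsum h, ENNReal.coe_toReal]
  exact NNReal.hasSum_coe.mpr h.hasSum

lemma ratio_tendsto (μ : PPM (Ed d)) (x : ℕ → Ed d) (R : ℕ → ℝ) (hR : Tendsto R atTop atTop)
    (h : Tendsto (fun n => μ.var (ball (x n) (R n)) / ENNReal.ofReal (R n ^ d)) atTop (𝓝 0)) :
    (∀ᶠ n in atTop, μ.var (ball (x n) (R n)) ≠ ⊤) ∧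
    Tendsto (fun n => (μ.var (ball (x n) (R n))).toReal / R n ^ d) atTop (𝓝 0) := by
  constructor
  · filter_upwards [h.eventually_lt_const (u := 1) (by simp)] with n hn htop
    rw [htop, ENNReal.top_div_of_ne_top ENNReal.ofReal_ne_top] at hn
    simp at hn
  · have h1 := (ENNReal.tendsto_toReal ENNReal.zero_ne_top).comp h
    rw [ENNReal.toReal_zero] at h1
    refine h1.congr' ?_
    filter_upwards [hR.eventually_gt_atTop 0] with n hn
    simp only [Function.comp_apply, ENNReal.toReal_div]
    rw [ENNReal.toReal_ofReal (by positivity)]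

lemma case_one (μ μh : PPM (Ed d)) (hμpos : μ.Nonneg) (hμt : μ.temperate)
    (hlf : μh.locFinite) (hFμ : IsFT μ μh)
    (x : ℕ → Ed d) (R : ℕ → ℝ) (hR : Tendsto R atTop atTop)
    (h : Tendsto (fun n => μ.var (ball (x n) (R n)) / ENNReal.ofReal (R n ^ d)) atTop (𝓝 0)) :
    μ.mass = 0 := by
  obtain ⟨g, hq, ψ, hg, hgc, hh, hhc, hψ, hψ0, hψpos, hg0, hθ, hψc, C, hC0, hC⟩ := exists_test d
  have hCb : ∀ u, ψ u ≤ C := fun u => by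
    refine le_trans ?_ (hC u)
    exact le_mul_of_one_le_left (hψ0 u) (one_le_pow₀ (by linarith [norm_nonneg u]))
  obtain ⟨hfin, hrat⟩ := ratio_tendsto μ x R hR h
  have hθ0 : ∀ x : Ed d, 0 ≤ ‖x‖ ^ 2 * ψ x := fun x => mul_nonneg (by positivity) (hψ0 x)
  have key : ∀ K : ℝ, 0 < K →
      ‖μh.mass 0‖ * ‖g 0‖ ≤ K⁻¹ ^ 2 * (‖μh.mass 0‖ * ‖hq 0‖) := by
    intro K hK
    have hs : Tendsto (fun n => R n / K) atTop atTop := hR.atTop_div_const hK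
    have l1 := lim_md μh hlf hg.continuous hgc _ hs x 0
    have l2 := lim_md μh hlf hh.continuous hhc _ hs x 0
    have l3 := (hrat.const_mul (C * K ^ d)).add (l2.const_mul (K⁻¹ ^ 2))
    rw [mul_zero, zero_add] at l3
    refine le_of_tendsto_of_tendsto l1 l3 ?_
    filter_upwards [hfin, hR.eventually_gt_atTop 0] with n hn hRn
    have hsn : 0 < R n / K := by positivity
    obtain ⟨s1, e1⟩ := pos_sum μ μh hμpos hμt hFμ hg hgc hψ hψ0 hsn (x n)
    obtain ⟨s2, e2⟩ := pos_sum μ μh hμpos hμt hFμ hh hhc hθ hθ0 hsn (x n)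
    have s3 := hasSum_var μ hn
    have s4 := (s3.mul_left (C * ((R n / K) ^ d)⁻¹)).add (s2.hasSum.mul_left (K⁻¹ ^ 2))
    rw [e2] at s4
    have s5 := s1.hasSum
    rw [e1] at s5
    refine (hasSum_le (fun y => ?_) s5 s4).trans (le_of_eq ?_)
    · have hinv : (0 : ℝ) ≤ ((R n / K) ^ d)⁻¹ := by positivity
      set u := (R n / K)⁻¹ • (y - x n) with hu
      by_cases hy : y ∈ ball (x n) (R n)
      · rw [Set.indicator_of_mem hy]
        have := hCb u
        have t1 : ‖μ.mass y‖ * (((R n / K) ^ d)⁻¹ * ψ u) ≤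
            C * ((R n / K) ^ d)⁻¹ * ‖μ.mass y‖ := by
          calc _ ≤ ‖μ.mass y‖ * (((R n / K) ^ d)⁻¹ * C) := by gcongr
            _ = _ := by ring
        have t2 : 0 ≤ K⁻¹ ^ 2 * (‖μ.mass y‖ * (((R n / K) ^ d)⁻¹ * (‖u‖ ^ 2 * ψ u))) := by
          have := hθ0 u
          positivity
        linarith
      · rw [Set.indicator_of_notMem hy, mul_zero, zero_add]
        have hKu : K ≤ ‖u‖ := by
          rw [mem_ball, not_lt, dist_eq_norm] at hy
          rw [hu, norm_smul, norm_inv, Real.norm_of_nonneg hsn.le, inv_div, div_mul_eq_mul_div,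
            le_div_iff₀ hRn]
          gcongr
        have h1 : 1 ≤ K⁻¹ ^ 2 * ‖u‖ ^ 2 := by
          rw [← mul_pow]
          refine one_le_pow₀ ?_
          rw [inv_mul_eq_div, le_div_iff₀ hK]; linarith
        have h2 : 0 ≤ ‖μ.mass y‖ * (((R n / K) ^ d)⁻¹ * ψ u) :=
          mul_nonneg (norm_nonneg _) (mul_nonneg hinv (hψ0 u))
        nlinarith
    · rw [div_pow, inv_div]; ring
  have hz : ‖μh.mass 0‖ = 0 := by
    have hlim : Tendsto (fun n : ℕ => ((n : ℝ) + 1)⁻¹ ^ 2 * (‖μh.mass 0‖ * ‖hq 0‖)) atTop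
        (𝓝 (0 ^ 2 * (‖μh.mass 0‖ * ‖hq 0‖))) := by
      refine Tendsto.mul_const _ (Tendsto.pow ?_ 2)
      exact tendsto_inv_atTop_zero.comp
        (tendsto_atTop_add_const_right _ _ tendsto_natCast_atTop_atTop)
    have := ge_of_tendsto' hlim fun n => key _ (by positivity)
    have hgp := norm_pos_iff.mpr hg0
    have h0 := norm_nonneg (μh.mass 0)
    by_contra hne
    have : 0 < ‖μh.mass 0‖ := lt_of_le_of_ne h0 (Ne.symm hne)
    have := mul_pos this hgp
    linarith
  have hall : ∀ γ, μh.mass γ = 0 := fun γ => by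
    have := mass_le_zero μ μh hμpos hμt hlf hFμ hg hgc hψ hψ0 hg0 γ
    rw [hz] at this
    exact norm_le_zero_iff.mp this
  funext a
  obtain ⟨s1, e1⟩ := pos_sum μ μh hμpos hμt hFμ hg hgc hψ hψ0 one_pos a
  simp only [hall, zero_mul, tsum_zero, norm_zero] at e1
  have := (s1.hasSum_iff.mpr e1)
  rw [hasSum_zero_iff_of_nonneg fun y =>
    mul_nonneg (norm_nonneg _) (mul_nonneg (by positivity) (hψ0 _))] at this
  have := congrFun this a
  simpa [hψpos.ne'] using this

lemma summable_weight (μ : PPM (Ed d)) {ψ : Ed d → ℝ} (hψ0 : ∀ x, 0 ≤ ψ x) (hψpos : 0 < ψ 0)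
    (hψc : Continuous ψ) {C : ℝ} (hs : ∀ c, Summable fun x => ‖μ.mass x‖ * ψ (x - c))
    (hC : ∀ c, ∑' x, ‖μ.mass x‖ * ψ (x - c) ≤ C) (a : Ed d) :
    Summable fun x => ‖μ.mass x‖ * ((1 + ‖x - a‖) ^ (d + 1))⁻¹ := by
  let W : Ed d → ℝ := fun y => ((1 + ‖y - a‖) ^ (d + 1))⁻¹
  have hWpos : ∀ y, 0 < W y := fun y => by
    have := norm_nonneg (y - a)
    simp only [W]; positivity
  have hWi : Integrable W := by
    have h1 : Integrable (fun x : Ed d => (1 + ‖x‖) ^ (-((d + 1 : ℕ) : ℝ))) :=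
      integrable_one_add_norm (by simp)
    have h2 := h1.comp_sub_right a
    refine h2.congr (ae_of_all _ fun y => ?_)
    simp only [W]
    rw [Real.rpow_neg (by positivity), Real.rpow_natCast]
  obtain ⟨ρ, hρ, hball⟩ : ∃ ρ > 0, ∀ u : Ed d, ‖u‖ < ρ → ψ 0 / 2 < ψ u := by
    have := hψc.continuousAt.eventually_const_lt (half_lt_self hψpos)
    obtain ⟨ρ, hρ, hb⟩ := Metric.eventually_nhds_iff.mp this
    exact ⟨ρ, hρ, fun u hu => hb (by simpa using hu)⟩
  set r := min ρ 1 with hr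
  have hr0 : 0 < r := by positivity
  let S := Function.support μ.mass
  have : Countable S := μ.countable.to_subtype
  set k : ℝ := ψ 0 / 2 * (2 ^ (d + 1))⁻¹ with hk
  have hk0 : 0 < k := by positivity
  have hlow : ∀ x : S, ENNReal.ofReal (‖μ.mass x‖ * W x) *
      (ENNReal.ofReal k * volume (ball (0 : Ed d) r)) ≤
      ∫⁻ y, ENNReal.ofReal (‖μ.mass x‖ * ψ (x - y)) * ENNReal.ofReal (W y) := by
    intro x
    calc _ = ∫⁻ y in ball (x : Ed d) r, ENNReal.ofReal (‖μ.mass x‖ * W x * k) := by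
          rw [setLIntegral_const, Measure.addHaar_ball_center volume (x : Ed d), ← mul_assoc,
            ENNReal.ofReal_mul (mul_nonneg (norm_nonneg _) (hWpos _).le)]
      _ ≤ ∫⁻ y in ball (x : Ed d) r,
          ENNReal.ofReal (‖μ.mass x‖ * ψ (x - y)) * ENNReal.ofReal (W y) := by
          refine setLIntegral_mono' measurableSet_ball fun y hy => ?_
          rw [← ENNReal.ofReal_mul (mul_nonneg (norm_nonneg _) (hψ0 _))]
          refine ENNReal.ofReal_le_ofReal ?_
          rw [mem_ball, dist_comm, dist_eq_norm] at hy
          have e1 := (hball (x - y) (hy.trans_le (min_le_left _ _))).le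
          have e2 : (2 ^ (d + 1))⁻¹ * W x ≤ W y := by
            simp only [W]
            rw [← mul_inv, ← mul_pow]
            refine inv_anti₀ (by positivity) ?_
            refine pow_le_pow_left₀ (by positivity) ?_ _
            have e3 : ‖(x : Ed d) - y‖ < 1 := hy.trans_le (min_le_right _ _)
            have e4 : ‖y - a‖ ≤ ‖(x : Ed d) - y‖ + ‖(x : Ed d) - a‖ := by
              have : y - a = -((x : Ed d) - y) + (x - a) := by abel
              rw [this]; exact (norm_add_le _ _).trans (by rw [norm_neg])
            have := norm_nonneg ((x : Ed d) - a)
            linarith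
          have e5 : ψ 0 / 2 * ((2 ^ (d + 1))⁻¹ * W x) ≤ ψ (x - y) * W y :=
            mul_le_mul e1 e2 (mul_nonneg (by positivity) (hWpos _).le) (hψ0 _)
          calc _ = ‖μ.mass x‖ * (ψ 0 / 2 * ((2 ^ (d + 1))⁻¹ * W x)) := by rw [hk]; ring
            _ ≤ ‖μ.mass x‖ * (ψ (x - y) * W y) := by gcongr
            _ = _ := by ring
      _ ≤ _ := setLIntegral_le_lintegral _ _
  have hup : ∑' x : S, ∫⁻ y, ENNReal.ofReal (‖μ.mass x‖ * ψ (x - y)) * ENNReal.ofReal (W y)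
      ≤ ENNReal.ofReal C * ∫⁻ y, ENNReal.ofReal (W y) := by
    have hWm : Measurable fun y => ENNReal.ofReal (W y) := by
      have : Continuous W := by
        simp only [W]
        refine Continuous.inv₀ (by fun_prop) fun y => ?_
        have := norm_nonneg (y - a)
        positivity
      exact this.measurable.ennreal_ofReal
    rw [← lintegral_tsum, ← lintegral_const_mul _ hWm]
    · refine lintegral_mono fun y => ?_
      simp only
      rw [ENNReal.tsum_mul_right]
      gcongr
      have hnn : ∀ x, 0 ≤ ‖μ.mass x‖ * ψ (x - y) := fun x => mul_nonneg (norm_nonneg _) (hψ0 _)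
      calc ∑' x : S, ENNReal.ofReal (‖μ.mass x‖ * ψ (x - y))
          ≤ ∑' x, ENNReal.ofReal (‖μ.mass x‖ * ψ (x - y)) :=
            ENNReal.tsum_comp_le_tsum_of_injective Subtype.val_injective
              (fun x => ENNReal.ofReal (‖μ.mass x‖ * ψ (x - y)))
        _ = ENNReal.ofReal (∑' x, ‖μ.mass x‖ * ψ (x - y)) :=
            (ENNReal.ofReal_tsum_of_nonneg hnn (hs y)).symm
        _ ≤ _ := ENNReal.ofReal_le_ofReal (hC y)
    · intro x
      refine AEMeasurable.mul ?_ hWm.aemeasurable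
      exact (by fun_prop : Continuous fun y : Ed d =>
        ‖μ.mass x‖ * ψ (x - y)).measurable.ennreal_ofReal.aemeasurable
  have hfin : ∑' x : S, ENNReal.ofReal (‖μ.mass x‖ * W x) ≠ ⊤ := by
    intro htop
    have h1 := (ENNReal.tsum_le_tsum hlow).trans hup
    rw [ENNReal.tsum_mul_right, htop, ENNReal.top_mul] at h1
    · have h2 : ∫⁻ y, ENNReal.ofReal (W y) < ⊤ := hWi.lintegral_lt_top
      exact (ENNReal.mul_lt_top ENNReal.ofReal_lt_top h2).ne (top_le_iff.mp h1)
    · refine mul_ne_zero (by simpa using hk0) (measure_ball_pos _ _ hr0).ne'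
  have hsum : Summable fun x : S => ‖μ.mass x‖ * W x := by
    have := ENNReal.summable_toReal hfin
    refine this.congr fun x => ?_
    rw [ENNReal.toReal_ofReal (mul_nonneg (norm_nonneg _) (hWpos _).le)]
  have h3 := (summable_subtype_iff_indicator (f := fun x => ‖μ.mass x‖ * W x) (s := S)).mp hsum
  refine h3.congr fun x => ?_
  by_cases hx : x ∈ S
  · rw [Set.indicator_of_mem hx]
  · rw [Set.indicator_of_notMem hx]
    have : μ.mass x = 0 := by simpa [S] using hx
    simp [this]

lemma case_two (μ μh : PPM (Ed d)) (hμpos : μ.Nonneg) (hμt : μ.temperate)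
    (hlf : μh.locFinite) (hFμ : IsFT μ μh)
    (x : ℕ → Ed d) (R : ℕ → ℝ) (hR : Tendsto R atTop atTop)
    (h : Tendsto (fun n => μh.var (ball (x n) (R n)) / ENNReal.ofReal (R n ^ d)) atTop (𝓝 0)) :
    μ.mass = 0 := by
  classical
  obtain ⟨g, hq, ψ, hg, hgc, hh, hhc, hψ, hψ0, hψpos, hg0, hθ, hψc, C, hC0, hC⟩ := exists_test d
  obtain ⟨hfin, hrat⟩ := ratio_tendsto μh x R hR h
  obtain ⟨r, hr, hsupp⟩ := supp_ball hgc
  obtain ⟨D, hD0, hD⟩ := bdd_of_supp hg.continuous hgc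
  have hp : ∀ c, Summable (fun x => ‖μ.mass x‖ * ψ (x - c)) ∧
      ∑' x, ‖μ.mass x‖ * ψ (x - c) ≤
        ∑' γ, D * (ball (0 : Ed d) r).indicator (fun x => ‖μh.mass x‖) γ := by
    intro c
    obtain ⟨s1, e1⟩ := pos_sum μ μh hμpos hμt hFμ hg hgc hψ hψ0 one_pos c
    simp only [one_pow, inv_one, one_mul, one_smul] at s1 e1
    refine ⟨s1, e1.le.trans ?_⟩
    refine tsum_of_norm_bounded ((summable_ball μh hlf r).mul_left D).hasSum fun γ => ?_
    simp only [md, one_smul, sub_zero, norm_mul, ph_norm, one_mul]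
    by_cases hγ : γ ∈ ball (0 : Ed d) r
    · rw [Set.indicator_of_mem hγ, mul_comm]
      gcongr
      exact hD γ
    · have : g γ = 0 := by
        by_contra hne
        exact hγ (by simpa using hsupp _ hne)
      simp [this, hγ]
  funext a
  have hsw := summable_weight μ hψ0 hψpos hψc (fun c => (hp c).1) (fun c => (hp c).2) a
  have hdec : ∀ u, ψ u ≤ C * ((1 + ‖u‖) ^ (d + 1))⁻¹ := fun u => by
    rw [← div_eq_mul_inv, le_div_iff₀ (by positivity), mul_comm]; exact hC u
  let F : ℕ → Ed d → ℂ := fun n y =>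
    μ.mass y * (ph (-(inner ℝ (x n) (y - a))) * (ψ ((r / R n)⁻¹ • (y - a)) : ℂ))
  have key : Tendsto (fun n => ∑' y, F n y) atTop
      (𝓝 (∑' y, if y = a then μ.mass a * (ψ 0 : ℂ) else 0)) := by
    refine tendsto_tsum_of_dominated_convergence
      (bound := fun y => C * (‖μ.mass y‖ * ((1 + ‖y - a‖) ^ (d + 1))⁻¹)) (hsw.mul_left C) ?_ ?_
    · intro y
      split_ifs with hy
      · subst hy
        simp [F, ph_zero]
      · have hpos : 0 < ‖y - a‖ := norm_pos_iff.mpr (sub_ne_zero.mpr hy)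
        rw [tendsto_zero_iff_norm_tendsto_zero]
        have hb : ∀ n, ‖F n y‖ ≤ ‖μ.mass y‖ *
            (C * ((1 + ‖(r / R n)⁻¹ • (y - a)‖) ^ (d + 1))⁻¹) := by
          intro n
          simp only [F, norm_mul, ph_norm, one_mul, Complex.norm_real,
            Real.norm_of_nonneg (hψ0 _)]
          gcongr
          exact hdec _
        refine squeeze_zero (fun n => norm_nonneg _) hb ?_
        have t1 : Tendsto (fun n => 1 + ‖(r / R n)⁻¹ • (y - a)‖) atTop atTop := by
          refine tendsto_atTop_add_const_left _ _ ?_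
          have : Tendsto (fun n => R n / r * ‖y - a‖) atTop atTop :=
            (hR.atTop_div_const hr).atTop_mul_const hpos
          refine this.congr' ?_
          filter_upwards [hR.eventually_gt_atTop 0] with n hn
          rw [norm_smul, inv_div, Real.norm_of_nonneg (by positivity)]
        have t2 := (tendsto_inv_atTop_zero.comp
          ((tendsto_pow_atTop (Nat.succ_ne_zero d)).comp t1))
        have t3 := (t2.const_mul C).const_mul ‖μ.mass y‖
        simpa using t3
    · filter_upwards [hR.eventually_ge_atTop r] with n hn y
      have hRn : 0 < R n := hr.trans_le hn
      simp only [F, norm_mul, ph_norm, one_mul, Complex.norm_real, Real.norm_of_nonneg (hψ0 _)]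
      rw [mul_left_comm]
      gcongr
      refine (hdec _).trans ?_
      gcongr
      rw [norm_smul, inv_div, Real.norm_of_nonneg (by positivity)]
      exact le_mul_of_one_le_left (norm_nonneg _) ((one_le_div hr).mpr hn)
  rw [tsum_ite_eq] at key
  have hzero : Tendsto (fun n => ∑' y, F n y) atTop (𝓝 0) := by
    rw [tendsto_zero_iff_norm_tendsto_zero]
    have hlim := hrat.const_mul (D * r ^ d)
    rw [mul_zero] at hlim
    refine squeeze_zero' (Eventually.of_forall fun n => norm_nonneg _) ?_ hlim
    filter_upwards [hfin, hR.eventually_gt_atTop 0] with n hn hRn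
    have hs : 0 < r / R n := by positivity
    have e := (ft_md μ μh hμt hFμ hg hgc hs a (x n)).2
    have e1 : ∑' y, F n y = (((r / R n) ^ d : ℝ) : ℂ) *
        ∑' γ, μh.mass γ * md g (r / R n) a (x n) γ := by
      rw [← e, ← tsum_mul_left]
      refine tsum_congr fun y => ?_
      have hne : (((r / R n) ^ d : ℝ) : ℂ) ≠ 0 := by
        exact_mod_cast (pow_pos hs d).ne'
      rw [hψ, Complex.ofReal_inv]
      simp only [F]
      field_simp
    have e2 : ‖∑' γ, μh.mass γ * md g (r / R n) a (x n) γ‖ ≤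
        D * (μh.var (ball (x n) (R n))).toReal := by
      refine tsum_of_norm_bounded ((hasSum_var μh hn).mul_left D) fun γ => ?_
      simp only [md, norm_mul, ph_norm, one_mul]
      by_cases hγ : γ ∈ ball (x n) (R n)
      · rw [Set.indicator_of_mem hγ, mul_comm]
        gcongr
        exact hD _
      · have : g ((r / R n) • (γ - x n)) = 0 := by
          by_contra hne
          have h1 := hsupp _ hne
          rw [norm_smul, Real.norm_of_nonneg hs.le, div_mul_eq_mul_div, div_lt_iff₀ hRn] at h1
          apply hγ
          rw [mem_ball, dist_eq_norm]
          exact lt_of_mul_lt_mul_left h1 hr.le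
        simp [this, hγ]
    rw [e1, norm_mul, Complex.norm_real, Real.norm_of_nonneg (by positivity)]
    calc _ ≤ (r / R n) ^ d * (D * (μh.var (ball (x n) (R n))).toReal) := by gcongr
      _ = _ := by rw [div_pow]; ring
  have := tendsto_nhds_unique key hzero
  simpa [hψpos.ne'] using this

/-- If `μ` is a non-negative Poisson measure on `ℝ^d` with Fourier transform
`μh`, and on some sequence of balls `B(x_n, R_n)` with `R_n → ∞` either
`μ(B(x_n,R_n)) = o(R_n^d)` or `|μ̂|(B(x_n,R_n)) = o(R_n^d)`, then `μ = 0`. -/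
theorem statement3 {d : ℕ} (μ μh : PPM (Ed d))
    (hμpos : μ.Nonneg)
    (hμlf : μ.locFinite) (hμt : μ.temperate)
    (hμhlf : μh.locFinite) (hFμ : IsFT μ μh)
    (x : ℕ → Ed d) (R : ℕ → ℝ) (hR : Tendsto R atTop atTop)
    (h : Tendsto (fun n => μ.var (ball (x n) (R n)) / ENNReal.ofReal (R n ^ d))
          atTop (𝓝 0) ∨
         Tendsto (fun n => μh.var (ball (x n) (R n)) / ENNReal.ofReal (R n ^ d))
          atTop (𝓝 0)) :
    μ.mass = 0 := by
  rcases h with h | h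
  · exact case_one μ μh hμpos hμt hμhlf hFμ x R hR h
  · exact case_two μ μh hμpos hμt hμhlf hFμ x R hR h

end
end

section
/- Let E = ∪_n B(x_n, R_n) be a union of balls in ℝ^d with R_n → ∞ as n → ∞. Let A = {a_n} ⊂ ℝ^d and C = {c_n} ⊂ ℝ^d be sequences such that μ_A = Σ_n δ_{a_n} and μ_C = Σ_n δ_{c_n} are both Poisson measures, and suppose that under an appropriate numbering a_n − c_n → 0 as n → ∞ along n ∈ H, where H = {n ∈ ℕ : a_n ∈ E or c_n ∈ E}. Then μ_A = μ_C. -/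
open MeasureTheory Metric Filter Topology Complex SchwartzMap Bornology
open scoped RealInnerProductSpace ENNReal

noncomputable section

variable {d : ℕ}

/-- The counting measure of the multiset `{a_n}`, evaluated on a set `S`
(`μ_A(S) = #{n : a_n ∈ S}`, with multiplicity). -/
def cnt {d : ℕ} (a : ℕ → Ed d) (S : Set (Ed d)) : ℝ≥0∞ :=
  ∑' n : ℕ, S.indicator (fun _ => (1 : ℝ≥0∞)) (a n)

/-- The counting measure `μ_A = Σ_n δ_{a_n}` is a temperate distribution. -/
def seqTemperate {d : ℕ} (a : ℕ → Ed d) : Prop :=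
  ∀ φ : SchwartzMap (Ed d) ℂ, Summable fun n : ℕ => φ (a n)

/-- `ν` is the distributional Fourier transform of `μ_A = Σ_n δ_{a_n}`. -/
def seqIsFT {d : ℕ} (a : ℕ → Ed d) (ν : PPM (Ed d)) : Prop :=
  ∀ φ : SchwartzMap (Ed d) ℂ, HasCompactSupport φ →
    ∑' n : ℕ, (FourierTransform.fourierCLE ℂ (SchwartzMap (Ed d) ℂ) φ) (a n) = ν.pair ⇑φ

/-- `μ_A = Σ_n δ_{a_n}` is a Poisson measure. -/
def seqPoisson {d : ℕ} (a : ℕ → Ed d) : Prop :=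
  (∀ r : ℝ, cnt a (ball 0 r) < ⊤) ∧ seqTemperate a ∧
    ∃ ν : PPM (Ed d), ν.locFinite ∧ seqIsFT a ν

open FourierTransform in
lemma aux_band (d : ℕ) : ∃ φ : SchwartzMap (Ed d) ℂ, HasCompactSupport φ ∧
    (∀ x, 𝓕 φ x = (‖𝓕 φ x‖ : ℂ)) ∧ 𝓕 φ 0 = 1 := by
  let b : ContDiffBump (0 : Ed d) := ⟨1, 2, one_pos, one_lt_two⟩
  let f : Ed d → ℂ := fun x => ((b.normed volume x : ℝ) : ℂ)
  have hf1 : HasCompactSupport f := b.hasCompactSupport_normed.comp_left (g := fun r : ℝ => (r : ℂ)) (by simp)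
  have hf2 : ContDiff ℝ ((⊤ : ℕ∞) : WithTop ℕ∞) f := Complex.ofRealCLM.contDiff.comp b.contDiff_normed
  let g : SchwartzMap (Ed d) ℂ := hf1.toSchwartzMap hf2
  have hgf : ∀ x, g x = ((b.normed volume x : ℝ) : ℂ) := fun x => rfl
  have hreal : ∀ x, (starRingEnd ℂ) (𝓕 g x) = 𝓕 g x := by
    intro x
    rw [SchwartzMap.fourier_coe, Real.fourier_eq, ← integral_conj]
    rw [← integral_neg_eq_self]
    congr 1
    ext v
    simp only [Circle.smul_def, smul_eq_mul, map_mul, hgf, Complex.conj_ofReal, b.normed_neg, inner_neg_left, neg_neg]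
    rw [← Circle.coe_inv_eq_conj, ← AddChar.map_neg_eq_inv]
  have h0 : 𝓕 g 0 = 1 := by
    rw [SchwartzMap.fourier_coe, Real.fourier_eq]
    simp only [inner_zero_right, neg_zero, AddChar.map_zero_eq_one, one_smul, hgf]
    rw [integral_complex_ofReal, b.integral_normed]; simp
  let φ := SchwartzMap.convolution (ContinuousLinearMap.mul ℂ ℂ) g g
  have hφ : ∀ x, 𝓕 φ x = 𝓕 g x * 𝓕 g x := by
    intro x
    rw [SchwartzMap.fourier_convolution]; rfl
  refine ⟨φ, ?_, ?_, ?_⟩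
  · have : (φ : Ed d → ℂ) = MeasureTheory.convolution g g (ContinuousLinearMap.mul ℂ ℂ) volume := by
      ext x
      exact SchwartzMap.convolution_apply _ _ _ _
    rw [this]
    exact HasCompactSupport.convolution _ hf1 hf1
  · intro x
    rw [hφ, norm_mul]
    have := Complex.mul_conj' (𝓕 g x)
    rw [hreal] at this
    rw [this]; push_cast; ring
  · rw [hφ, h0]; simp

open FourierTransform in
lemma aux_mod {d : ℕ} (φ : SchwartzMap (Ed d) ℂ) (hφ : HasCompactSupport φ) (t : Ed d) :
    ∃ φ' : SchwartzMap (Ed d) ℂ, HasCompactSupport φ' ∧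
      (∀ s, φ' s = φ s * (Real.fourierChar (inner ℝ s t) : ℂ)) ∧
      ∀ x, 𝓕 φ' x = 𝓕 φ (x - t) := by
  let f : Ed d → ℂ := fun s => φ s * (Real.fourierChar (inner ℝ s t) : ℂ)
  have hf1 : HasCompactSupport f := hφ.mul_right
  have hf2 : ContDiff ℝ ((⊤ : ℕ∞) : WithTop ℕ∞) f := by
    refine φ.smooth'.mul ?_
    simp only [Real.fourierChar_apply]
    have h1 : ContDiff ℝ ((⊤ : ℕ∞) : WithTop ℕ∞) (fun s : Ed d => ((2 * Real.pi * inner ℝ s t : ℝ) : ℂ)) :=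
      Complex.ofRealCLM.contDiff.comp (contDiff_const.mul (contDiff_id.inner ℝ contDiff_const))
    exact (h1.mul contDiff_const).cexp
  refine ⟨hf1.toSchwartzMap hf2, hf1, fun s => rfl, fun x => ?_⟩
  rw [SchwartzMap.fourier_coe, SchwartzMap.fourier_coe, Real.fourier_eq, Real.fourier_eq]
  congr 1
  ext v
  change _ • (φ v * _) = _
  have : -inner ℝ v (x - t) = -inner ℝ v x + inner ℝ v t := by rw [inner_sub_right]; ring
  rw [this]
  simp only [Circle.smul_def, smul_eq_mul, AddChar.map_add_eq_mul, Circle.coe_mul]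
  ring

open FourierTransform in
lemma aux_dil {d : ℕ} (φ : SchwartzMap (Ed d) ℂ) (hφ : HasCompactSupport φ) (j : ℝ) (hj : 0 < j) :
    ∃ φ' : SchwartzMap (Ed d) ℂ, HasCompactSupport φ' ∧
      ∀ x, 𝓕 φ' x = 𝓕 φ (j • x) := by
  let f : Ed d → ℂ := fun s => ((j⁻¹ ^ d : ℝ) : ℂ) * φ (j⁻¹ • s)
  have hf1 : HasCompactSupport f := (hφ.comp_smul (inv_ne_zero hj.ne')).mul_left
  have hf2 : ContDiff ℝ ((⊤ : ℕ∞) : WithTop ℕ∞) f :=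
    contDiff_const.mul (φ.smooth'.comp (contDiff_const_smul _))
  refine ⟨hf1.toSchwartzMap hf2, hf1, fun x => ?_⟩
  rw [SchwartzMap.fourier_coe, SchwartzMap.fourier_coe, Real.fourier_eq, Real.fourier_eq]
  have := MeasureTheory.Measure.integral_comp_inv_smul_of_nonneg (μ := (volume : Measure (Ed d)))
    (fun v => Real.fourierChar (-inner ℝ v (j • x)) • φ v) hj.le
  have h2 : ∀ v, Real.fourierChar (-inner ℝ v x) • (hf1.toSchwartzMap hf2) v =
      ((j⁻¹ ^ d : ℝ) : ℂ) * (Real.fourierChar (-inner ℝ (j⁻¹ • v) (j • x)) • φ (j⁻¹ • v)) := by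
    intro v
    change _ • (((j⁻¹ ^ d : ℝ) : ℂ) * φ (j⁻¹ • v)) = _
    rw [inner_smul_left, inner_smul_right]
    simp only [conj_trivial, inv_mul_cancel_left₀ hj.ne']
    simp only [Circle.smul_def, smul_eq_mul]
    ring
  simp_rw [h2]
  rw [integral_const_mul, this]
  simp only [finrank_euclideanSpace, Fintype.card_fin, Complex.real_smul]
  rw [← mul_assoc, ← Complex.ofReal_mul, ← mul_pow, inv_mul_cancel₀ hj.ne']
  simp

lemma aux_locsum {d : ℕ} (ν : PPM (Ed d)) (hν : ν.locFinite) (φ : SchwartzMap (Ed d) ℂ)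
    (hφ : HasCompactSupport φ) : Summable fun s => ‖ν.mass s * φ s‖ := by
  obtain ⟨r, hr⟩ := hφ.isCompact.isBounded.subset_ball (0 : Ed d)
  obtain ⟨M, hM⟩ := hφ.exists_bound_of_continuous φ.continuous
  have h1 : Summable (fun s : ball (0 : Ed d) r => ‖ν.mass s‖₊) :=
    ENNReal.tsum_coe_ne_top_iff_summable.1 (hν r).ne
  have h2 : Summable (fun s : ball (0 : Ed d) r => ‖ν.mass s‖) := by
    exact NNReal.summable_coe.2 h1
  have h3 := summable_subtype_iff_indicator (f := fun s => ‖ν.mass s‖) (s := ball (0 : Ed d) r) |>.1 h2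
  refine Summable.of_nonneg_of_le (fun _ => norm_nonneg _) (fun s => ?_) (h3.mul_left M)
  by_cases hs : s ∈ ball (0 : Ed d) r
  · rw [Set.indicator_of_mem hs, norm_mul, mul_comm]
    exact mul_le_mul_of_nonneg_right (hM s) (norm_nonneg _)
  · have : φ s = 0 := by
      by_contra h
      exact hs (hr (subset_tsupport _ h))
    rw [Set.indicator_of_notMem hs, this]; simp

open FourierTransform in
lemma aux_series {d : ℕ} (a : ℕ → Ed d) (ν : PPM (Ed d)) (h : seqIsFT a ν)
    (φ : SchwartzMap (Ed d) ℂ) (hφ : HasCompactSupport φ) (t : Ed d) :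
    ∑' n, 𝓕 φ (a n - t) = ∑' s, ν.mass s * φ s * (Real.fourierChar (inner ℝ s t) : ℂ) := by
  obtain ⟨φ', h1, h2, h3⟩ := aux_mod φ hφ t
  have := h φ' h1
  simp only [← h3]
  refine this.trans ?_
  simp only [PPM.pair, h2, mul_assoc]

open FourierTransform in
lemma aux_sum {d : ℕ} (a : ℕ → Ed d) (h : seqTemperate a)
    (φ : SchwartzMap (Ed d) ℂ) (hφ : HasCompactSupport φ) (t : Ed d) :
    Summable fun n => 𝓕 φ (a n - t) := by
  obtain ⟨φ', h1, h2, h3⟩ := aux_mod φ hφ t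
  simp only [← h3]
  exact h _

open FourierTransform in
lemma aux_cnt {d : ℕ} (a : ℕ → Ed d) (h : seqPoisson a) :
    ∃ r : ℝ, 0 < r ∧ ∃ K : ℝ, ∀ t, cnt a (ball t r) ≤ ENNReal.ofReal K := by
  obtain ⟨-, ht, ν, hν, hft⟩ := h
  obtain ⟨φ, hφ, hpos, h0⟩ := aux_band d
  have hc : Continuous fun x => ‖𝓕 φ x‖ := (𝓕 φ).continuous.norm
  have h1 : ∀ᶠ x in 𝓝 (0 : Ed d), 1/2 < ‖𝓕 φ x‖ := by
    refine hc.continuousAt.eventually (lt_mem_nhds ?_)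
    simp only [h0]; norm_num
  obtain ⟨r, hr, hr'⟩ := Metric.eventually_nhds_iff_ball.1 h1
  refine ⟨r, hr, 2 * ∑' s, ‖ν.mass s * φ s‖, fun t => ?_⟩
  have hs := aux_sum a ht φ hφ t
  have hser := aux_series a ν hft φ hφ t
  have e1 : ∑' n, ‖𝓕 φ (a n - t)‖ ≤ ∑' s, ‖ν.mass s * φ s‖ := by
    have e2 : ((∑' n, ‖𝓕 φ (a n - t)‖ : ℝ) : ℂ) = ∑' n, 𝓕 φ (a n - t) := by
      rw [Complex.ofReal_tsum]
      exact tsum_congr fun n => (hpos _).symm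
    have e3 : ‖((∑' n, ‖𝓕 φ (a n - t)‖ : ℝ) : ℂ)‖ = ∑' n, ‖𝓕 φ (a n - t)‖ := by
      rw [Complex.norm_real, Real.norm_of_nonneg (tsum_nonneg fun _ => norm_nonneg _)]
    rw [← e3, e2, hser]
    have hn : ∀ s, ‖ν.mass s * φ s * (Real.fourierChar (inner ℝ s t) : ℂ)‖ = ‖ν.mass s * φ s‖ := by
      intro s; rw [norm_mul, Circle.norm_coe, mul_one]
    refine (norm_tsum_le_tsum_norm ?_).trans_eq (tsum_congr hn)
    simp only [hn]
    exact aux_locsum ν hν φ hφ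
  calc cnt a (ball t r) ≤ ∑' n, ENNReal.ofReal (2 * ‖𝓕 φ (a n - t)‖) := by
        refine ENNReal.tsum_le_tsum fun n => ?_
        by_cases hn : a n ∈ ball t r
        · rw [Set.indicator_of_mem hn, ENNReal.one_le_ofReal]
          have := hr' (a n - t) (by simpa [dist_eq_norm] using hn)
          linarith
        · rw [Set.indicator_of_notMem hn]; exact zero_le
    _ = ENNReal.ofReal (∑' n, 2 * ‖𝓕 φ (a n - t)‖) :=
        (ENNReal.ofReal_tsum_of_nonneg (fun _ => by positivity) (hs.norm.mul_left 2)).symm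
    _ ≤ _ := by
        refine ENNReal.ofReal_le_ofReal ?_
        rw [tsum_mul_left]
        linarith

lemma aux_weight {d : ℕ} (a : ℕ → Ed d) (h : seqPoisson a) :
    ∃ K : ℝ, 0 ≤ K ∧ ∀ z, (Summable fun n => ((1 + ‖a n - z‖) ^ (d+1))⁻¹) ∧
      ∑' n, ((1 + ‖a n - z‖) ^ (d+1))⁻¹ ≤ K := by
  obtain ⟨r, hr, K, hK⟩ := aux_cnt a h
  let w : Ed d → ℝ := fun x => ((1 + ‖x‖) ^ (d+1))⁻¹
  have hw0 : ∀ x, 0 ≤ w x := fun x => by positivity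
  have hwc : Continuous w := by
    refine Continuous.inv₀ (by fun_prop) (fun x => by positivity)
  have hwi : Integrable w := by
    have := integrable_one_add_norm (E := Ed d) (μ := volume) (r := ((d+1 : ℕ) : ℝ)) (by simp)
    refine this.congr (Filter.Eventually.of_forall fun x => ?_)
    simp only [w]
    rw [Real.rpow_neg (by positivity), Real.rpow_natCast]
  have hI : ∫⁻ u, ENNReal.ofReal (w u) < ⊤ := by
    rw [← ofReal_integral_eq_lintegral_ofReal hwi (Filter.Eventually.of_forall hw0)]
    exact ENNReal.ofReal_lt_top
  have hcmp : ∀ b z u, u ∈ ball b r → w (b - z) ≤ (1 + r) ^ (d+1) * w (u - z) := by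
    intro b z u hu
    have h1 : ‖u - z‖ ≤ ‖b - z‖ + r := by
      have : ‖u - b‖ < r := by simpa [dist_eq_norm] using hu
      calc ‖u - z‖ = ‖(b - z) + (u - b)‖ := by congr 1; abel
        _ ≤ _ := norm_add_le _ _
        _ ≤ _ := by linarith
    have h2 : 1 + ‖u - z‖ ≤ (1 + r) * (1 + ‖b - z‖) := by
      nlinarith [norm_nonneg (b - z)]
    have h3 : (1 + ‖u - z‖) ^ (d+1) ≤ (1 + r) ^ (d+1) * (1 + ‖b - z‖) ^ (d+1) := by
      rw [← mul_pow]
      exact pow_le_pow_left₀ (by positivity) h2 _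
    simp only [w]
    rw [← div_eq_mul_inv, inv_eq_one_div, div_le_div_iff₀ (by positivity) (by positivity)]
    linarith
  let C : ℝ≥0∞ := ENNReal.ofReal ((1 + r) ^ (d+1))
  let T : ℝ≥0∞ := C * (ENNReal.ofReal K * ∫⁻ u, ENNReal.ofReal (w u))
  have hT : T < ⊤ := ENNReal.mul_lt_top ENNReal.ofReal_lt_top (ENNReal.mul_lt_top ENNReal.ofReal_lt_top hI)
  let B : ℝ≥0∞ := volume (ball (0 : Ed d) r)
  have hB0 : B ≠ 0 := (measure_ball_pos _ _ hr).ne'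
  have hB1 : B ≠ ⊤ := measure_ball_lt_top.ne
  have main : ∀ z, ∑' n, ENNReal.ofReal (w (a n - z)) ≤ T / B := by
    intro z
    rw [ENNReal.le_div_iff_mul_le (Or.inl hB0) (Or.inl hB1), ← ENNReal.tsum_mul_right]
    have hm : Measurable fun u => ENNReal.ofReal (w (u - z)) :=
      ENNReal.measurable_ofReal.comp (hwc.comp (continuous_id.sub continuous_const)).measurable
    calc ∑' n, ENNReal.ofReal (w (a n - z)) * B
        ≤ ∑' n, ∫⁻ u, C * (ball (a n) r).indicator (fun u => ENNReal.ofReal (w (u - z))) u := by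
          refine ENNReal.tsum_le_tsum fun n => ?_
          have : B = volume (ball (a n) r) := by
            simp only [B]
            rw [← Measure.addHaar_ball_center volume (a n) r]
          rw [this, ← setLIntegral_const, lintegral_const_mul _ (hm.indicator measurableSet_ball),
            lintegral_indicator measurableSet_ball, ← lintegral_const_mul _ hm]
          refine setLIntegral_mono (hm.const_mul _) fun u hu => ?_
          rw [← ENNReal.ofReal_mul (by positivity)]
          exact ENNReal.ofReal_le_ofReal (hcmp _ _ _ hu)
      _ = ∫⁻ u, ∑' n, C * (ball (a n) r).indicator (fun u => ENNReal.ofReal (w (u - z))) u := by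
          rw [lintegral_tsum]
          exact fun n => ((hm.indicator measurableSet_ball).const_mul _).aemeasurable
      _ ≤ ∫⁻ u, C * (ENNReal.ofReal K * ENNReal.ofReal (w (u - z))) := by
          refine lintegral_mono fun u => ?_
          simp only
          rw [ENNReal.tsum_mul_left]
          gcongr
          refine le_trans ?_ (mul_le_mul_left (hK u) _)
          rw [cnt, ← ENNReal.tsum_mul_right]
          refine ENNReal.tsum_le_tsum fun n => ?_
          by_cases hu : u ∈ ball (a n) r
          · rw [Set.indicator_of_mem hu, Set.indicator_of_mem (mem_ball_comm.1 hu), one_mul]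
          · rw [Set.indicator_of_notMem hu]; exact zero_le
      _ = T := by
          rw [lintegral_const_mul _ (hm.const_mul _), lintegral_const_mul _ hm]
          rw [lintegral_sub_right_eq_self (fun u => ENNReal.ofReal (w u)) z]
  have hTB : T / B < ⊤ := ENNReal.div_lt_top hT.ne hB0
  refine ⟨(T / B).toReal, ENNReal.toReal_nonneg, fun z => ?_⟩
  have hsm : Summable fun n => w (a n - z) := by
    have := ENNReal.summable_toReal ((main z).trans_lt hTB).ne
    refine this.congr fun n => ENNReal.toReal_ofReal (hw0 _)
  refine ⟨hsm, ?_⟩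
  have := main z
  rw [← ENNReal.ofReal_tsum_of_nonneg (fun n => hw0 _) hsm] at this
  exact (ENNReal.ofReal_le_iff_le_toReal hTB.ne).1 this

lemma aux_decay_s4 {d : ℕ} (ψ : SchwartzMap (Ed d) ℂ) : ∃ C : ℝ, 0 < C ∧
    ∀ x, ‖ψ x‖ ≤ C * (1 + ‖x‖)⁻¹ * ((1 + ‖x‖) ^ (d+1))⁻¹ := by
  have := fun x => SchwartzMap.one_add_le_sup_seminorm_apply (𝕜 := ℝ) (m := (d+2, 0)) (k := d+2) (n := 0)
    le_rfl le_rfl ψ x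
  simp only [norm_iteratedFDeriv_zero] at this
  set C := 2 ^ (d+2) * ((Finset.Iic (d+2, 0)).sup fun m => SchwartzMap.seminorm ℝ m.1 m.2) ψ
  have hC : 0 ≤ C := le_trans (by positivity) (this 0)
  refine ⟨C + 1, by linarith, fun x => ?_⟩
  have h1 := this x
  rw [mul_assoc, ← mul_inv, ← pow_succ', ← div_eq_mul_inv, le_div_iff₀ (by positivity)]
  rw [mul_comm]
  exact h1.trans (by linarith)

lemma aux_near {d : ℕ} (E : Set (Ed d)) (a c : ℕ → Ed d) (hA : seqPoisson a) (hC : seqPoisson c)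
    (h : Tendsto (fun n => a n - c n)
      (atTop ⊓ Filter.principal {n : ℕ | a n ∈ E ∨ c n ∈ E}) (𝓝 0))
    (y : ℕ → Ed d) (r : ℕ → ℝ) (hr : Tendsto r atTop atTop)
    (hy : Tendsto (fun k => ‖y k‖) atTop atTop) (hyE : ∀ᶠ k in atTop, ball (y k) (r k) ⊆ E)
    (ψ : SchwartzMap (Ed d) ℂ) (t : Ed d) :
    Tendsto (fun k => ∑' n, (ψ (a n - (t + y k)) - ψ (c n - (t + y k)))) atTop (𝓝 0) := by
  obtain ⟨Ka, hKa0, hKa⟩ := aux_weight a hA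
  obtain ⟨Kc, hKc0, hKc⟩ := aux_weight c hC
  obtain ⟨C, hC0, hCψ⟩ := aux_decay_s4 ψ
  have hu : UniformContinuous ψ := by
    exact ZeroAtInftyContinuousMap.uniformContinuous (SchwartzMap.toZeroAtInfty ψ)
  have key : ∀ η : ℝ, 0 < η → ∀ᶠ k in atTop, ∀ n,
      ‖ψ (a n - (t + y k)) - ψ (c n - (t + y k))‖ ≤
        η * (((1 + ‖a n - (t + y k)‖) ^ (d+1))⁻¹ + ((1 + ‖c n - (t + y k)‖) ^ (d+1))⁻¹) := by
    intro η hη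
    let ρ := C / η
    have hρ : 0 < ρ := by positivity
    have hfar : ∀ x, ρ ≤ ‖x‖ → ‖ψ x‖ ≤ η * ((1 + ‖x‖) ^ (d+1))⁻¹ := by
      intro x hx
      refine (hCψ x).trans ?_
      gcongr
      rw [← div_eq_mul_inv, div_le_iff₀ (by positivity)]
      have : C = η * ρ := by simp only [ρ]; field_simp
      nlinarith
    let η' := η * ((1 + ρ) ^ (d+1))⁻¹
    have hη' : 0 < η' := by positivity
    obtain ⟨δ, hδ, hδ'⟩ := Metric.uniformContinuous_iff.1 hu η' hη'
    have h1 := (Metric.tendsto_nhds.1 h) δ hδ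
    rw [eventually_inf_principal] at h1
    obtain ⟨n0, hn0⟩ := eventually_atTop.1 h1
    let M := ∑ n ∈ Finset.range n0, (‖a n‖ + ‖c n‖)
    have hM : ∀ n < n0, ‖a n‖ ≤ M ∧ ‖c n‖ ≤ M := by
      intro n hn
      have := Finset.single_le_sum (f := fun n => ‖a n‖ + ‖c n‖) (fun i _ => by positivity)
        (Finset.mem_range.2 hn)
      have h1 := norm_nonneg (a n)
      have h2 := norm_nonneg (c n)
      constructor <;> simp only [M] <;> linarith
    filter_upwards [hr.eventually_gt_atTop (ρ + ‖t‖), hy.eventually_gt_atTop (M + ρ + ‖t‖), hyE]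
      with k hk1 hk2 hk3 n
    have hin : ∀ b : Ed d, ‖b - (t + y k)‖ < ρ → b ∈ E ∧ M < ‖b‖ := by
      intro b hb
      constructor
      · apply hk3
        rw [mem_ball, dist_eq_norm]
        calc ‖b - y k‖ = ‖(b - (t + y k)) + t‖ := by congr 1; abel
          _ ≤ _ := norm_add_le _ _
          _ < _ := by linarith
      · have : ‖y k‖ ≤ ‖b‖ + ‖b - (t + y k)‖ + ‖t‖ := by
          calc ‖y k‖ = ‖b - (b - (t + y k)) - t‖ := by congr 1; abel
            _ ≤ ‖b - (b - (t + y k))‖ + ‖t‖ := norm_sub_le _ _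
            _ ≤ _ := by gcongr; exact norm_sub_le _ _
        linarith
    have hnear : (a n ∈ E ∨ c n ∈ E) → n0 ≤ n →
        ‖ψ (a n - (t + y k)) - ψ (c n - (t + y k))‖ ≤ η' := by
      intro hE hn
      have := hn0 n hn hE
      rw [← dist_eq_norm]
      refine (hδ' ?_).le
      rw [dist_sub_right, dist_eq_norm]
      simpa using this
    have hwn : ∀ b : Ed d, ‖b‖ < ρ → η' ≤ η * ((1 + ‖b‖) ^ (d+1))⁻¹ := by
      intro b hb
      simp only [η']
      gcongr
    have p1 : 0 ≤ η * ((1 + ‖a n - (t + y k)‖) ^ (d+1))⁻¹ := by positivity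
    have p2 : 0 ≤ η * ((1 + ‖c n - (t + y k)‖) ^ (d+1))⁻¹ := by positivity
    rw [mul_add]
    by_cases ha : ‖a n - (t + y k)‖ < ρ
    · obtain ⟨e1, e2⟩ := hin _ ha
      have hn : n0 ≤ n := by
        by_contra hlt
        exact absurd (hM n (not_le.1 hlt)).1 (not_le.2 e2)
      linarith [hnear (Or.inl e1) hn, hwn _ ha]
    by_cases hc : ‖c n - (t + y k)‖ < ρ
    · obtain ⟨e1, e2⟩ := hin _ hc
      have hn : n0 ≤ n := by
        by_contra hlt
        exact absurd (hM n (not_le.1 hlt)).2 (not_le.2 e2)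
      linarith [hnear (Or.inr e1) hn, hwn _ hc]
    · refine (norm_sub_le _ _).trans ?_
      linarith [hfar _ (not_lt.1 ha), hfar _ (not_lt.1 hc)]
  rw [Metric.tendsto_nhds]
  intro ε hε
  filter_upwards [key (ε / (Ka + Kc + 1)) (by positivity)] with k hk
  rw [dist_zero_right]
  obtain ⟨sa, ba⟩ := hKa (t + y k)
  obtain ⟨sc, bc⟩ := hKc (t + y k)
  refine (tsum_of_norm_bounded ((sa.hasSum.add sc.hasSum).mul_left _) hk).trans_lt ?_
  rw [div_mul_eq_mul_div, div_lt_iff₀ (by positivity)]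
  exact mul_lt_mul_of_pos_left (by linarith) hε

lemma aux_ap {d : ℕ} (w : Ed d → ℂ) (hw : Summable fun s => ‖w s‖) (y : ℕ → Ed d)
    (hy : ∀ t, Tendsto (fun k => ∑' s, w s * (Real.fourierChar (inner ℝ s (t + y k)) : ℂ))
      atTop (𝓝 0)) (t : Ed d) :
    ∑' s, w s * (Real.fourierChar (inner ℝ s t) : ℂ) = 0 := by
  let U : Ultrafilter ℕ := Ultrafilter.of atTop
  have hU : (U : Filter ℕ) ≤ atTop := Ultrafilter.of_le _
  have hex : ∀ s : Ed d, ∃ u : Circle,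
      Tendsto (fun k => Real.fourierChar (inner ℝ s (y k))) U (𝓝 u) := fun s =>
    ⟨_, (U.map (fun k => Real.fourierChar (inner ℝ s (y k)))).le_nhds_lim⟩
  choose u hu using hex
  have hbd : ∀ (s : Ed d) (z : Circle), ‖w s * (z : ℂ)‖ ≤ ‖w s‖ := by
    intro s z; rw [norm_mul, Circle.norm_coe, mul_one]
  have hcc : Continuous (fun z : Circle => (z : ℂ)) := by fun_prop
  have step1 : ∀ m, ∑' s, w s * ((Real.fourierChar (inner ℝ s (t - y m)) * u s : Circle) : ℂ) = 0 := by
    intro m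
    have h1 := (hy (t - y m)).mono_left hU
    refine tendsto_nhds_unique ?_ h1
    refine tendsto_tsum_of_dominated_convergence hw (fun s => ?_)
      (Filter.Eventually.of_forall fun k s => hbd s _)
    refine tendsto_const_nhds.mul ?_
    refine (hcc.tendsto _).comp ?_
    simp only [inner_add_right, AddChar.map_add_eq_mul]
    exact tendsto_const_nhds.mul (hu s)
  have step2 : Tendsto (fun m => ∑' s, w s * ((Real.fourierChar (inner ℝ s (t - y m)) * u s : Circle) : ℂ)) U
      (𝓝 (∑' s, w s * (Real.fourierChar (inner ℝ s t) : ℂ))) := by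
    refine tendsto_tsum_of_dominated_convergence hw (fun s => ?_)
      (Filter.Eventually.of_forall fun k s => hbd s _)
    refine tendsto_const_nhds.mul ?_
    refine (hcc.tendsto _).comp ?_
    simp only [inner_sub_right, AddChar.map_sub_eq_div]
    have := ((tendsto_const_nhds (x := Real.fourierChar (inner ℝ s t))).div' (hu s)).mul_const (u s)
    simpa using this
  simp only [step1] at step2
  exact tendsto_nhds_unique step2 tendsto_const_nhds

open FourierTransform in
lemma aux_pt {d : ℕ} (a : ℕ → Ed d) (hA : seqPoisson a) (ψ : SchwartzMap (Ed d) ℂ) (h0 : ψ 0 = 1)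
    (p : Ed d) :
    Tendsto (fun j : ℕ => ∑' n, ψ (((j : ℝ) + 1) • (a n - p))) atTop
      (𝓝 (((cnt a {p}).toReal : ℝ) : ℂ)) := by
  obtain ⟨K, hK0, hK⟩ := aux_weight a hA
  obtain ⟨C, hC0, hCψ⟩ := aux_decay_s4 ψ
  have e : (((cnt a {p}).toReal : ℝ) : ℂ) =
      ∑' n, (((({p} : Set (Ed d)).indicator (fun _ => (1 : ℝ≥0∞)) (a n)).toReal : ℝ) : ℂ) := by
    rw [← Complex.ofReal_tsum, cnt, ENNReal.tsum_toReal_eq]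
    intro n
    by_cases h : a n ∈ ({p} : Set (Ed d))
    · rw [Set.indicator_of_mem h]; simp
    · rw [Set.indicator_of_notMem h]; simp
  rw [e]
  refine tendsto_tsum_of_dominated_convergence ((hK p).1.mul_left C) (fun n => ?_)
      (Filter.Eventually.of_forall fun j n => ?_)
  · by_cases h : a n = p
    · simp [h, h0]
    · rw [Set.indicator_of_notMem (by simpa using h)]
      simp only [ENNReal.toReal_zero, Complex.ofReal_zero]
      have hz : Tendsto ψ (cocompact _) (𝓝 0) :=
        (SchwartzMap.toZeroAtInfty ψ).zero_at_infty'
      refine hz.comp ?_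
      rw [← Metric.cobounded_eq_cocompact, ← tendsto_norm_atTop_iff_cobounded]
      simp only [norm_smul]
      refine Tendsto.atTop_mul_const (norm_pos_iff.2 (sub_ne_zero.2 h)) ?_
      refine tendsto_norm_atTop_atTop.comp ?_
      exact tendsto_atTop_add_const_right _ _ tendsto_natCast_atTop_atTop
  · refine (hCψ _).trans ?_
    have hle : ‖a n - p‖ ≤ ‖((j : ℝ) + 1) • (a n - p)‖ := by
      rw [norm_smul, Real.norm_of_nonneg (by positivity)]
      nlinarith [norm_nonneg (a n - p), (Nat.cast_nonneg j : (0:ℝ) ≤ j)]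
    have h1 : (1 + ‖((j : ℝ) + 1) • (a n - p)‖)⁻¹ ≤ 1 := by
      apply inv_le_one_of_one_le₀
      linarith [norm_nonneg (((j : ℝ) + 1) • (a n - p))]
    calc _ ≤ C * 1 * ((1 + ‖a n - p‖) ^ (d+1))⁻¹ := by gcongr
      _ = _ := by ring

lemma aux_cnt_sum {d : ℕ} (a : ℕ → Ed d) (S : Set (Ed d)) :
    cnt a S = ∑' p : Ed d, S.indicator (fun _ => (1 : ℝ≥0∞)) p * cnt a {p} := by
  simp only [cnt, ← ENNReal.tsum_mul_left]
  rw [ENNReal.tsum_comm]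
  refine tsum_congr fun n => ?_
  rw [tsum_eq_single (a n)]
  · simp
  · intro p hp
    rw [Set.indicator_of_notMem (a := a n) (s := {p}) (by simpa using hp.symm)]
    simp

lemma aux_centers {d : ℕ} (hd : d ≠ 0) (x : ℕ → Ed d) (R : ℕ → ℝ) (hR : Tendsto R atTop atTop) :
    ∃ (y : ℕ → Ed d), Tendsto (fun k => ‖y k‖) atTop atTop ∧
      ∀ᶠ k in atTop, ball (y k) (R k / 2) ⊆ ball (x k) (R k) := by
  have : NeZero d := ⟨hd⟩
  obtain ⟨e, he⟩ := exists_norm_eq (Ed d) (zero_le_one' ℝ)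
  refine ⟨fun k => if R k / 4 ≤ ‖x k‖ then x k else x k + (R k / 2) • e, ?_, ?_⟩
  · have h4 : Tendsto (fun k => R k / 4) atTop atTop := hR.atTop_div_const (by norm_num)
    refine tendsto_atTop_mono' _ ?_ h4
    filter_upwards [hR.eventually_gt_atTop 0] with k hk
    split_ifs with hx
    · exact hx
    · have h1 : ‖(R k / 2) • e‖ = R k / 2 := by
        rw [norm_smul, he, Real.norm_of_nonneg (by positivity), mul_one]
      have h2 : ‖(R k / 2) • e‖ ≤ ‖x k + (R k / 2) • e‖ + ‖x k‖ := by
        calc _ = ‖(x k + (R k / 2) • e) - x k‖ := by congr 1; abel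
          _ ≤ _ := norm_sub_le _ _
      push Not at hx
      linarith
  · filter_upwards [hR.eventually_gt_atTop 0] with k hk
    split_ifs with hx
    · exact ball_subset_ball (by linarith)
    · apply ball_subset_ball'
      have h1 : ‖(R k / 2) • e‖ = R k / 2 := by
        rw [norm_smul, he, Real.norm_of_nonneg (by positivity), mul_one]
      rw [dist_eq_norm, add_sub_cancel_left, h1]
      linarith

/-- Let `E = ∪_n B(x_n,R_n)` with `R_n → ∞`, and let `μ_A = Σ δ_{a_n}`,
`μ_C = Σ δ_{c_n}` be Poisson measures such that `a_n - c_n → 0` along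
`H = {n : a_n ∈ E or c_n ∈ E}`. Then `μ_A = μ_C`. -/
theorem statement4 {d : ℕ} (x : ℕ → Ed d) (R : ℕ → ℝ) (hR : Tendsto R atTop atTop)
    (E : Set (Ed d)) (hE : E = ⋃ n : ℕ, ball (x n) (R n))
    (a c : ℕ → Ed d) (hA : seqPoisson a) (hC : seqPoisson c)
    (h : Tendsto (fun n => a n - c n)
      (atTop ⊓ Filter.principal {n : ℕ | a n ∈ E ∨ c n ∈ E}) (𝓝 0)) :
    ∀ S : Set (Ed d), cnt a S = cnt c S := by
  have hfin : ∀ b : ℕ → Ed d, seqPoisson b → ∀ p, cnt b {p} ≠ ⊤ := by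
    intro b hb p
    refine (lt_of_le_of_lt ?_ (hb.1 (‖p‖ + 1))).ne
    refine ENNReal.tsum_le_tsum fun n => ?_
    refine Set.indicator_le_indicator_of_subset ?_ (fun _ => zero_le) _
    intro q hq
    rw [Set.mem_singleton_iff.1 hq]
    simp
  have hd : d ≠ 0 := by
    rintro rfl
    have h1 := hA.1 1
    have : cnt a (ball 0 1) = ⊤ := by
      have h2 : ∀ n, a n = 0 := fun n => Subsingleton.elim _ _
      simp [cnt, h2, ENNReal.tsum_const_eq_top_of_ne_zero]
    exact h1.ne this
  obtain ⟨y, hy, hyE⟩ := aux_centers hd x R hR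
  have hyE' : ∀ᶠ k in atTop, ball (y k) (R k / 2) ⊆ E := by
    filter_upwards [hyE] with k hk
    rw [hE]
    exact hk.trans (Set.subset_iUnion (fun n => ball (x n) (R n)) k)
  have hR2 : Tendsto (fun k => R k / 2) atTop atTop := hR.atTop_div_const (by norm_num)
  have hmain : ∀ φ : SchwartzMap (Ed d) ℂ, HasCompactSupport φ → ∀ t,
      ∑' n, FourierTransform.fourier φ (a n - t) = ∑' n, FourierTransform.fourier φ (c n - t) := by
    intro φ hφ
    obtain ⟨νa, ha1, ha2⟩ := hA.2.2
    obtain ⟨νc, hc1, hc2⟩ := hC.2.2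
    have sa := aux_locsum νa ha1 φ hφ
    have sc := aux_locsum νc hc1 φ hφ
    let w : Ed d → ℂ := fun s => νa.mass s * φ s - νc.mass s * φ s
    have hw : Summable fun s => ‖w s‖ :=
      Summable.of_nonneg_of_le (fun _ => norm_nonneg _) (fun s => norm_sub_le _ _) (sa.add sc)
    have hD : ∀ t, ∑' n, FourierTransform.fourier φ (a n - t) - ∑' n, FourierTransform.fourier φ (c n - t)
        = ∑' s, w s * (Real.fourierChar (inner ℝ s t) : ℂ) := by
      intro t
      rw [aux_series a νa ha2 φ hφ, aux_series c νc hc2 φ hφ, ← Summable.tsum_sub]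
      · refine tsum_congr fun s => ?_
        simp only [w]; ring
      · refine Summable.of_norm (sa.congr fun s => ?_)
        rw [norm_mul (_ * _) _, Circle.norm_coe, mul_one]
      · refine Summable.of_norm (sc.congr fun s => ?_)
        rw [norm_mul (_ * _) _, Circle.norm_coe, mul_one]
    intro t
    rw [← sub_eq_zero, hD]
    refine aux_ap w hw y (fun t => ?_) t
    have := aux_near E a c hA hC h y _ hR2 hy hyE' (FourierTransform.fourier φ) t
    refine this.congr fun k => ?_
    rw [← hD, Summable.tsum_sub (aux_sum a hA.2.1 φ hφ _) (aux_sum c hC.2.1 φ hφ _)]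
  obtain ⟨φ, hφ, -, h0⟩ := aux_band d
  have hpt : ∀ p, cnt a {p} = cnt c {p} := by
    intro p
    have l1 := aux_pt a hA _ h0 p
    have l2 := aux_pt c hC _ h0 p
    have heq : ∀ j : ℕ, ∑' n, FourierTransform.fourier φ (((j : ℝ) + 1) • (a n - p)) =
        ∑' n, FourierTransform.fourier φ (((j : ℝ) + 1) • (c n - p)) := by
      intro j
      obtain ⟨φ', h1, h2⟩ := aux_dil φ hφ ((j : ℝ) + 1) (by positivity)
      simpa only [h2] using hmain φ' h1 p
    simp only [heq] at l1
    have := tendsto_nhds_unique l1 l2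
    exact (ENNReal.toReal_eq_toReal_iff' (hfin a hA p) (hfin c hC p)).1 (by exact_mod_cast this)
  intro S
  rw [aux_cnt_sum a S, aux_cnt_sum c S]
  simp only [hpt]

end
end
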